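/- arXiv:2508.16960 — 2 statements merged into one kernel-verified Lean document; each statement's English description precedes it below -/
import Mathlib

section
/- There exists a constant C > 0 such that for every T with 0 ≤ T ≤ 1 and every admissible source g on [0,T]×ℝ², the Duhamel term D(t) = ∫₀^t U(t−τ) g(τ) dτ satisfies the double smoothing estimate sup_{x₁ ∈ ℝ} (∫_ℝ ∫₀^T |∂²_{x₁}D(t)(x₁,x₂)|² dt dx₂)^{1/2} ≤ C ∫_ℝ (∫_ℝ ∫₀^T |g(τ,x₁,x₂)|² dτ dx₂)^{1/2} dx₁. -/
/-!
After damping by `e^{-t}`, which costs only a factor `e` because `T ≤ 1`, the estimate becomes a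
statement on all of `ℝ` in time, and Plancherel in `t` and `x₂` reduces it to a bound at each fixed
pair of frequencies `(l, b)`. There the transform `u` of `e^{-t} D`, as a function of `x₁` alone,
solves the third-order equation `(∂³ - N² ∂ + q) u = 8π³ Γ` with `N = 2πb` and
`q = 8π³ (1 + 2πil)`, where `Γ` is the transform of the damped source. (The phase `ξ₁ (ξ₁² + ξ₂²)` is taken in the variables of the
Fourier transform with kernel `e^{-2πi x·ξ}`, whence the factors `8π³`.) Because of the damping,
`Re q = 8π³ > 0`, so no root of the cubic `s³ - N² s + q` lies on the imaginary axis.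

The heart of the proof is the bound `‖u''‖_{L^∞} ≤ 9 ‖f‖_{L¹}` for the bounded solution of
`(∂³ - N² ∂ + q) u = f`, uniformly in `N` and `q` (`resolvent_bound`). Write the cubic as
`(s - a)(s - b)(s - c)`, so that `u'' = ∂(∂ - c)⁻¹ ∂(∂ - b)⁻¹ (∂ - a)⁻¹ f`. The operator
`(∂ - a)⁻¹` maps `L¹` to `L^∞` with norm at most `1` (`ode_L1`), and `∂(∂ - μ)⁻¹` is bounded on
`L^∞` by `1 + |μ| / |Re μ|` (`W_cone`). At least two of the three roots lie in the cone
`|μ| ≤ 2 |Re μ|` (`cubic_roots`): any two of them satisfy `a² + ab + b² = N² ≥ 0`, whose left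
side would have negative real part if both were outside the cone. Taking `b` and `c` in the cone
gives the constant `3 · 3 = 9`.

Minkowski's inequality and Plancherel, now applied to the source, turn this into the smoothing
estimate for the iterated Fourier integral `∫ e^{2πi x₂ b} AA(t, x₁, b) db` (`Adm.smoothing`).
That integral is `∂²_{x₁} D` by Fubini and differentiation under the integral sign
(`Adm.Duh_eq`, `Adm.pd1_pd1_Duh`). The decay of the source and of its Fourier transform, uniform in
time, follows from compactness of `[0, T]` and continuity of the Fourier transform on the Schwartz
space (`exists_adm`). The resulting constant is `C = 72 π³ e`.
-/

open MeasureTheory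
open scoped ENNReal NNReal

noncomputable section

/-- Fourier transform on ℝ² (realized as ℝ × ℝ). -/
def FT (f : ℝ × ℝ → ℂ) : ℝ × ℝ → ℂ := fun ξ =>
  ∫ x : ℝ × ℝ,
    Complex.exp (((-(2 * Real.pi * (x.1 * ξ.1 + x.2 * ξ.2)) : ℝ) : ℂ) * Complex.I) * f x

/-- Inverse Fourier transform on ℝ². -/
def FTinv (f : ℝ × ℝ → ℂ) : ℝ × ℝ → ℂ := fun x =>
  ∫ ξ : ℝ × ℝ,
    Complex.exp ((((2 * Real.pi * (x.1 * ξ.1 + x.2 * ξ.2)) : ℝ) : ℂ) * Complex.I) * f ξ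

/-- The linear Zakharov–Kuznetsov group `U(t)φ = F⁻¹(e^{i t ξ₁(ξ₁²+ξ₂²)} Fφ)`. -/
def U (t : ℝ) (φ : ℝ × ℝ → ℂ) : ℝ × ℝ → ℂ :=
  FTinv (fun ξ => Complex.exp (Complex.I * ((t * ξ.1 * (ξ.1 ^ 2 + ξ.2 ^ 2) : ℝ) : ℂ)) * FT φ ξ)

/-- Fractional derivative in the first variable: `D^r_{x₁} f = F⁻¹(|ξ₁|^r F f)`. -/
def Dx1 (r : ℝ) (f : ℝ × ℝ → ℂ) : ℝ × ℝ → ℂ :=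
  FTinv (fun ξ => ((|ξ.1| ^ r : ℝ) : ℂ) * FT f ξ)

/-- Fractional derivative in the second variable: `D^r_{x₂} f = F⁻¹(|ξ₂|^r F f)`. -/
def Dx2 (r : ℝ) (f : ℝ × ℝ → ℂ) : ℝ × ℝ → ℂ :=
  FTinv (fun ξ => ((|ξ.2| ^ r : ℝ) : ℂ) * FT f ξ)

/-- Partial derivative ∂_{x₁}. -/
def pd1 (f : ℝ × ℝ → ℂ) : ℝ × ℝ → ℂ := fun x => fderiv ℝ f x (1, 0)

/-- Partial derivative ∂_{x₂}. -/
def pd2 (f : ℝ × ℝ → ℂ) : ℝ × ℝ → ℂ := fun x => fderiv ℝ f x (0, 1)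

/-- Duhamel integral `∫₀^t U(t-τ) g(τ) dτ`. -/
def Duh (g : ℝ → ℝ × ℝ → ℂ) (t : ℝ) : ℝ × ℝ → ℂ := fun x =>
  ∫ τ in (0:ℝ)..t, U (t - τ) (g τ) x

/-- Sobolev norm `‖f‖_{H^s(ℝ²)}`. -/
def HsNorm (s : ℝ) (f : ℝ × ℝ → ℂ) : ℝ≥0∞ :=
  (∫⁻ ξ : ℝ × ℝ,
      ENNReal.ofReal ((1 + ξ.1 ^ 2 + ξ.2 ^ 2) ^ s) * (‖FT f ξ‖₊ : ℝ≥0∞) ^ (2 : ℝ)) ^ ((1:ℝ)/2)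

/-- The mixed norm `‖f‖_{L^{9/4}_T L^∞_x}`. -/
def L94LinfNorm (T : ℝ) (f : ℝ → ℝ × ℝ → ℂ) : ℝ≥0∞ :=
  (∫⁻ t in Set.Icc (0:ℝ) T, (eLpNorm (f t) ⊤ volume) ^ ((9:ℝ)/4)) ^ ((4:ℝ)/9)

/-- The mixed norm `‖f‖_{L²_{x₁} L^∞_{x₂ T}}` (with genuine suprema). -/
def L2x1LinfNorm (T : ℝ) (f : ℝ → ℝ × ℝ → ℂ) : ℝ≥0∞ :=
  (∫⁻ x₁ : ℝ,
      (⨆ x₂ : ℝ, ⨆ t ∈ Set.Icc (0:ℝ) T, (‖f t (x₁, x₂)‖₊ : ℝ≥0∞)) ^ (2 : ℝ)) ^ ((1:ℝ)/2)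

/-- The mixed norm `‖f‖_{L^∞_{x₁} L²_{x₂ T}}`. -/
def LinfX1L2Norm (T : ℝ) (f : ℝ → ℝ × ℝ → ℂ) : ℝ≥0∞ :=
  ⨆ x₁ : ℝ,
    (∫⁻ x₂ : ℝ, ∫⁻ t in Set.Icc (0:ℝ) T, (‖f t (x₁, x₂)‖₊ : ℝ≥0∞) ^ (2 : ℝ)) ^ ((1:ℝ)/2)

/-- The mixed norm `‖g‖_{L¹_{x₁} L²_{x₂ T}}`. -/
def L1x1L2Norm (T : ℝ) (g : ℝ → ℝ × ℝ → ℂ) : ℝ≥0∞ :=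
  ∫⁻ x₁ : ℝ,
    (∫⁻ x₂ : ℝ, ∫⁻ τ in Set.Icc (0:ℝ) T, (‖g τ (x₁, x₂)‖₊ : ℝ≥0∞) ^ (2 : ℝ)) ^ ((1:ℝ)/2)

/-! ### Plancherel and Minkowski -/

open scoped FourierTransform in
/-- Plancherel for `f ∈ L¹ ∩ L²`. The content is that the integral `𝓕 f` agrees almost everywhere with
the `L²` extension of the Fourier transform, for which the isometry is known; both define the same
tempered distribution. -/
lemma plancherel_aux (f : ℝ → ℂ) (h1 : Integrable f) (h2 : MemLp f 2) :
    ∫⁻ ξ, ‖𝓕 f ξ‖ₑ ^ 2 = ∫⁻ x, ‖f x‖ₑ ^ 2 := by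
  set F : Lp ℂ 2 (volume : Measure ℝ) := h2.toLp f with hF
  have hcont : Continuous (𝓕 f) := by
    have := VectorFourier.fourierIntegral_continuous (L := innerₗ ℝ) Real.continuous_fourierChar
      (by exact continuous_inner) h1
    exact this
  have hae : ∀ᵐ x, 𝓕 f x = (𝓕 F : Lp ℂ 2 (volume : Measure ℝ)) x := by
    apply ae_eq_of_integral_contDiff_smul_eq hcont.locallyIntegrable
    · exact (Lp.memLp (𝓕 F)).locallyIntegrable (by norm_num)
    · intro g g_smooth g_cpt
      have hg₁ : HasCompactSupport (Complex.ofRealCLM ∘ g) := g_cpt.comp_left rfl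
      have hg₂ : ContDiff ℝ ((⊤ : ℕ∞) : WithTop ℕ∞) (Complex.ofRealCLM ∘ g) := by fun_prop
      set φ : SchwartzMap ℝ ℂ := hg₁.toSchwartzMap hg₂ with hφ
      have h := congrArg (fun T => T φ) (Lp.fourier_toTemperedDistribution_eq F)
      simp only [TemperedDistribution.fourier_apply, Lp.toTemperedDistribution_apply] at h
      have h3 := VectorFourier.integral_fourierIntegral_smul_eq_flip (L := innerₗ ℝ)
        (μ := volume) (ν := volume) Real.continuous_fourierChar (by exact continuous_inner)
        φ.integrable h1
      have h4 : ∫ x, (𝓕 φ) x • F x = ∫ x, (𝓕 φ) x • f x := by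
        apply integral_congr_ae
        filter_upwards [h2.coeFn_toLp] with x hx
        rw [hF, hx]
      rw [h4] at h
      calc ∫ x, g x • 𝓕 f x = ∫ x, φ x • 𝓕 f x := by
            apply integral_congr_ae
            filter_upwards with x
            simp [hφ]
        _ = ∫ x, (𝓕 φ) x • f x := by
            simp only [flip_innerₗ] at h3
            exact h3.symm
        _ = _ := h
        _ = _ := by
            apply integral_congr_ae
            filter_upwards with x
            simp [hφ]
  have e1 : ∫⁻ ξ, ‖𝓕 f ξ‖ₑ ^ 2 = ∫⁻ ξ, ‖(𝓕 F : Lp ℂ 2 (volume : Measure ℝ)) ξ‖ₑ ^ 2 :=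
    lintegral_congr_ae (hae.mono fun x hx => by simp only [hx])
  have e2 : ∫⁻ ξ, ‖f ξ‖ₑ ^ 2 = ∫⁻ ξ, ‖F ξ‖ₑ ^ 2 :=
    lintegral_congr_ae (h2.coeFn_toLp.mono fun x hx => by simp only [hF, hx])
  have key : ∀ G : Lp ℂ 2 (volume : Measure ℝ), ∫⁻ ξ, ‖G ξ‖ₑ ^ 2 = ‖G‖ₑ ^ 2 := by
    intro G
    rw [Lp.enorm_def, eLpNorm_eq_lintegral_rpow_enorm_toReal (by norm_num) (by norm_num)]
    simp only [ENNReal.toReal_ofNat, ENNReal.rpow_ofNat]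
    rw [← ENNReal.rpow_natCast, ← ENNReal.rpow_mul]
    norm_num
  rw [e1, e2, key, key]
  congr 1
  rw [← ofReal_norm, ← ofReal_norm, Lp.norm_fourier_eq]

/-- The character `e^{2πiθ}`. -/
def ee (θ : ℝ) : ℂ := Complex.exp (((2 * Real.pi * θ : ℝ) : ℂ) * Complex.I)

@[simp] lemma norm_ee (θ : ℝ) : ‖ee θ‖ = 1 := by
  unfold ee; exact Complex.norm_exp_ofReal_mul_I _

@[fun_prop] lemma continuous_ee : Continuous ee := by unfold ee; fun_prop

lemma ee_add (a b : ℝ) : ee (a + b) = ee a * ee b := by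
  unfold ee; rw [← Complex.exp_add]; congr 1; push_cast; ring

open scoped FourierTransform in
lemma fourier_eq_ee (f : ℝ → ℂ) (ξ : ℝ) : 𝓕 f ξ = ∫ x, ee (-(x * ξ)) * f x := by
  rw [Real.fourier_eq']
  congr 1; ext x
  simp only [ee, smul_eq_mul]
  congr 2
  simp
  ring

open scoped FourierTransform in
lemma fourierInv_eq_ee (f : ℝ → ℂ) (ξ : ℝ) : 𝓕⁻ f ξ = ∫ x, ee (x * ξ) * f x := by
  rw [Real.fourierInv_eq']
  congr 1; ext x
  simp only [ee, smul_eq_mul]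
  congr 2
  simp
  ring

/-- Plancherel on the line, for the Fourier integral with kernel `e^{-2πi x ξ}`. -/
lemma plancherel (f : ℝ → ℂ) (h1 : Integrable f) (h2 : MemLp f 2) :
    ∫⁻ ξ, ‖∫ x, ee (-(x * ξ)) * f x‖ₑ ^ 2 = ∫⁻ x, ‖f x‖ₑ ^ 2 := by
  rw [← plancherel_aux f h1 h2]
  simp_rw [fourier_eq_ee]

lemma plancherel_inv (f : ℝ → ℂ) (h1 : Integrable f) (h2 : MemLp f 2) :
    ∫⁻ ξ, ‖∫ x, ee (x * ξ) * f x‖ₑ ^ 2 = ∫⁻ x, ‖f x‖ₑ ^ 2 := by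
  rw [← plancherel f h1 h2,
    ← lintegral_neg_eq_self (μ := volume) (fun ξ => ‖∫ x, ee (-(x * ξ)) * f x‖ₑ ^ 2)]
  simp

/-- Minkowski's integral inequality for the exponent `2`. -/
lemma minkowski_two {α β : Type*} [MeasurableSpace α] [MeasurableSpace β] (μ : Measure α)
    (ν : Measure β) [SFinite μ] [SFinite ν] (f : α → β → ℝ≥0∞)
    (hf : Measurable (Function.uncurry f)) :
    ∫⁻ x, (∫⁻ y, f x y ∂ν) ^ 2 ∂μ ≤ (∫⁻ y, (∫⁻ x, f x y ^ 2 ∂μ) ^ ((1:ℝ)/2) ∂ν) ^ 2 := by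
  have m1 : ∀ x, Measurable (f x) := fun x => hf.of_uncurry_left
  have m2 : ∀ y, Measurable (fun x => f x y) := fun y => hf.of_uncurry_right
  have hN : Measurable fun y => (∫⁻ x, f x y ^ 2 ∂μ) ^ ((1:ℝ)/2) := by
    apply Measurable.pow_const
    apply Measurable.lintegral_prod_left'  (f := fun p : α × β => f p.1 p.2 ^ 2)
    exact hf.pow_const 2
  have m3 : Measurable fun y => ∫⁻ x, f x y ∂μ :=
    Measurable.lintegral_prod_left' hf
  calc ∫⁻ x, (∫⁻ y, f x y ∂ν) ^ 2 ∂μ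
      = ∫⁻ x, ∫⁻ y, ∫⁻ z, f x y * f x z ∂ν ∂ν ∂μ := by
        congr 1; ext x
        rw [sq, ← lintegral_mul_const _ (m1 x)]
        congr 1; ext y
        rw [lintegral_const_mul _ (m1 x)]
    _ = ∫⁻ y, ∫⁻ z, ∫⁻ x, f x y * f x z ∂μ ∂ν ∂ν := by
        rw [lintegral_lintegral_swap]
        · congr 1; ext y
          rw [lintegral_lintegral_swap]
          exact ((m2 y).comp measurable_fst |>.mul hf).aemeasurable
        · apply Measurable.aemeasurable
          apply Measurable.lintegral_prod_right' (f := fun p : (α × β) × β => f p.1.1 p.1.2 * f p.1.1 p.2)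
          exact (hf.comp measurable_fst).mul
            (hf.comp ((measurable_fst.comp measurable_fst).prodMk measurable_snd))
    -- Cauchy-Schwarz in `x` for each pair `(y, z)`.
    _ ≤ ∫⁻ y, ∫⁻ z, (∫⁻ x, f x y ^ 2 ∂μ) ^ ((1:ℝ)/2) * (∫⁻ x, f x z ^ 2 ∂μ) ^ ((1:ℝ)/2) ∂ν ∂ν := by
        gcongr with y z
        have := ENNReal.lintegral_mul_le_Lp_mul_Lq μ Real.HolderConjugate.two_two
          (m2 y).aemeasurable (m2 z).aemeasurable
        simpa using this
    _ = _ := by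
        rw [sq, ← lintegral_mul_const _ hN]
        congr 1; ext y
        rw [lintegral_const_mul _ hN]

/-! ### First-order equations on the line -/

open Filter Topology

/-- If `Re μ > 0`, the homogeneous solutions of `w' = μ w + φ` grow at `+∞`, so a bounded solution is
`w(x) = -∫_x^∞ e^{-μ(y - x)} φ(y) dy`; any bound `L` for the partial integrals of the absolute value
of the integrand is then a bound for `|w(x)|`. -/
lemma ode_core {μ : ℂ} (hμ : 0 < μ.re) {w φ : ℝ → ℂ}
    (hw : ∀ x, HasDerivAt w (μ * w x + φ x) x) (hφ : Continuous φ) {B : ℝ}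
    (hB : ∀ x, ‖w x‖ ≤ B) (x : ℝ) {L : ℝ}
    (hL : ∀ R, x ≤ R → ∫ y in x..R, Real.exp (-μ.re * (y - x)) * ‖φ y‖ ≤ L) :
    ‖w x‖ ≤ L := by
  have key : ∀ R, x ≤ R → ‖w x‖ ≤ Real.exp (-μ.re * (R - x)) * B + L := by
    intro R hR
    have hd : ∀ y : ℝ, HasDerivAt (fun y : ℝ => Complex.exp (-μ * (y - x)) * w y)
        (Complex.exp (-μ * (y - x)) * φ y) y := by
      intro y
      have h1 : HasDerivAt (fun y : ℝ => -μ * ((y : ℂ) - x)) (-μ) y := by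
        simpa using (((hasDerivAt_id y).ofReal_comp).sub_const (x : ℂ)).const_mul (-μ)
      convert! h1.cexp.mul (hw y) using 1
      ring
    have hint := intervalIntegral.integral_eq_sub_of_hasDerivAt (a := x) (b := R)
      (fun y _ => hd y) (by apply Continuous.intervalIntegrable; fun_prop)
    simp only [sub_self, mul_zero, Complex.exp_zero, one_mul] at hint
    have hn : ∀ y : ℝ, ‖Complex.exp (-μ * ((y : ℂ) - x))‖ = Real.exp (-μ.re * (y - x)) := by
      intro y; rw [Complex.norm_exp]; simp
    have h2 : w x = Complex.exp (-μ * ((R : ℂ) - x)) * w R -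
        ∫ y in x..R, Complex.exp (-μ * ((y : ℂ) - x)) * φ y := by rw [hint]; ring
    rw [h2]
    refine (norm_sub_le _ _).trans (add_le_add ?_ ?_)
    · rw [norm_mul, hn]
      exact mul_le_mul_of_nonneg_left (hB R) (Real.exp_nonneg _)
    · refine (intervalIntegral.norm_integral_le_integral_norm hR).trans (le_trans (le_of_eq ?_) (hL R hR))
      congr 1; ext y; rw [norm_mul, hn]
  have hlim : Tendsto (fun R : ℝ => Real.exp (-μ.re * (R - x)) * B + L) atTop (𝓝 (0 * B + L)) := by
    refine Tendsto.add_const _ (Tendsto.mul_const _ ?_)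
    apply Real.tendsto_exp_atBot.comp
    apply Tendsto.const_mul_atTop_of_neg (by linarith)
    exact tendsto_atTop_add_const_right _ _ tendsto_id
  have := ge_of_tendsto hlim (eventually_atTop.2 ⟨x, key⟩)
  simpa using this

lemma ode_L1_pos {μ : ℂ} (hμ : 0 < μ.re) {w φ : ℝ → ℂ}
    (hw : ∀ x, HasDerivAt w (μ * w x + φ x) x) (hφ : Continuous φ) {B : ℝ}
    (hB : ∀ x, ‖w x‖ ≤ B) (hi : Integrable φ) (x : ℝ) : ‖w x‖ ≤ ∫ y, ‖φ y‖ := by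
  refine ode_core hμ hw hφ hB x fun R hR => ?_
  calc ∫ y in x..R, Real.exp (-μ.re * (y - x)) * ‖φ y‖ ≤ ∫ y in x..R, ‖φ y‖ := by
        apply intervalIntegral.integral_mono_on hR
        · apply Continuous.intervalIntegrable; fun_prop
        · apply Continuous.intervalIntegrable; fun_prop
        · intro y hy
          refine mul_le_of_le_one_left (norm_nonneg _) (Real.exp_le_one_iff.2 ?_)
          nlinarith [hy.1]
    _ ≤ ∫ y, ‖φ y‖ := by
        rw [intervalIntegral.integral_of_le hR]
        exact setIntegral_le_integral hi.norm (ae_of_all _ fun _ => norm_nonneg _)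

lemma ode_Linf_pos {μ : ℂ} (hμ : 0 < μ.re) {w φ : ℝ → ℂ}
    (hw : ∀ x, HasDerivAt w (μ * w x + φ x) x) (hφ : Continuous φ) {B M : ℝ}
    (hB : ∀ x, ‖w x‖ ≤ B) (hM : ∀ x, ‖φ x‖ ≤ M) (x : ℝ) : ‖w x‖ ≤ M / μ.re := by
  have hM0 : 0 ≤ M := (norm_nonneg _).trans (hM 0)
  refine ode_core hμ hw hφ hB x fun R hR => ?_
  have hd : ∀ y, HasDerivAt (fun y : ℝ => -(M / μ.re) * Real.exp (-μ.re * (y - x)))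
      (Real.exp (-μ.re * (y - x)) * M) y := by
    intro y
    have h1 : HasDerivAt (fun y : ℝ => -μ.re * (y - x)) (-μ.re) y := by
      simpa using ((hasDerivAt_id y).sub_const x).const_mul (-μ.re)
    convert! h1.exp.const_mul (-(M / μ.re)) using 1
    field_simp
  calc ∫ y in x..R, Real.exp (-μ.re * (y - x)) * ‖φ y‖
      ≤ ∫ y in x..R, Real.exp (-μ.re * (y - x)) * M := by
        apply intervalIntegral.integral_mono_on hR
        · apply Continuous.intervalIntegrable; fun_prop
        · apply Continuous.intervalIntegrable; fun_prop
        · intro y hy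
          exact mul_le_mul_of_nonneg_left (hM y) (Real.exp_nonneg _)
    _ = _ := intervalIntegral.integral_eq_sub_of_hasDerivAt (fun y _ => hd y)
          (by apply Continuous.intervalIntegrable; fun_prop)
    _ ≤ M / μ.re := by
        simp only [sub_self, mul_zero, Real.exp_zero]
        have : 0 ≤ M / μ.re * Real.exp (-μ.re * (R - x)) := by positivity
        linarith

/-- The reflection `x ↦ -x` exchanges `μ` and `-μ`, which reduces `Re μ < 0` to `Re μ > 0`. -/
lemma ode_reflect {μ : ℂ} {w φ : ℝ → ℂ}
    (hw : ∀ x, HasDerivAt w (μ * w x + φ x) x) (x : ℝ) :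
    HasDerivAt (fun x => w (-x)) ((-μ) * w (-x) + -φ (-x)) x := by
  have := (hw (-x)).scomp x (hasDerivAt_neg x)
  convert! this using 1
  simp

/-- A bounded solution of `w' = μ w + φ` with `Re μ ≠ 0` is controlled in `L^∞` by the `L¹` norm
of `φ`, uniformly in `μ`. -/
lemma ode_L1 {μ : ℂ} (hμ : μ.re ≠ 0) {w φ : ℝ → ℂ}
    (hw : ∀ x, HasDerivAt w (μ * w x + φ x) x) (hφ : Continuous φ) {B : ℝ}
    (hB : ∀ x, ‖w x‖ ≤ B) (hi : Integrable φ) (x : ℝ) : ‖w x‖ ≤ ∫ y, ‖φ y‖ := by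
  rcases hμ.lt_or_gt with h | h
  · have := ode_L1_pos (μ := -μ) (by simpa using h) (ode_reflect hw) (by fun_prop)
      (fun x => hB (-x)) hi.comp_neg.neg (-x)
    simp only [neg_neg, norm_neg] at this
    rwa [integral_neg_eq_self (fun y => ‖φ y‖)] at this
  · exact ode_L1_pos h hw hφ hB hi x

/-- A bounded solution of `w' = μ w + φ` with `Re μ ≠ 0` satisfies `|w| ≤ sup |φ| / |Re μ|`. -/
lemma ode_Linf {μ : ℂ} (hμ : μ.re ≠ 0) {w φ : ℝ → ℂ}
    (hw : ∀ x, HasDerivAt w (μ * w x + φ x) x) (hφ : Continuous φ) {B M : ℝ}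
    (hB : ∀ x, ‖w x‖ ≤ B) (hM : ∀ x, ‖φ x‖ ≤ M) (x : ℝ) : ‖w x‖ ≤ M / |μ.re| := by
  rcases hμ.lt_or_gt with h | h
  · have := ode_Linf_pos (μ := -μ) (M := M) (by simpa using h) (ode_reflect hw) (by fun_prop)
      (fun x => hB (-x)) (fun x => by simpa using hM (-x)) (-x)
    rw [abs_of_neg h]
    simpa using this
  · rw [abs_of_pos h]
    exact ode_Linf_pos h hw hφ hB hM x

/-! ### The cubic symbol and its resolvent -/

/-- If `a² + ab + b² = N²` with `N` real, then `a` or `b` lies in the cone `|μ| ≤ 2 |Re μ|`: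
otherwise the left side would have negative real part. -/
lemma cone_of_sq {a b : ℂ} {N : ℝ} (h : a ^ 2 + a * b + b ^ 2 = (N : ℂ) ^ 2) :
    ‖a‖ ≤ 2 * |a.re| ∨ ‖b‖ ≤ 2 * |b.re| := by
  by_contra! hc
  obtain ⟨ha, hb⟩ := hc
  have ha' : (2 * |a.re|) ^ 2 < ‖a‖ ^ 2 := by gcongr
  have hb' : (2 * |b.re|) ^ 2 < ‖b‖ ^ 2 := by gcongr
  rw [mul_pow, sq_abs, Complex.sq_norm, Complex.normSq_apply] at ha' hb'
  have := congrArg Complex.re h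
  simp [sq] at this
  nlinarith [sq_nonneg (a.re - b.re), sq_nonneg (a.im + b.im), sq_nonneg N]

/-- A cubic `s³ - N² s + q` with `N` real splits in such a way that the last two roots lie in the cone
`|μ| ≤ 2 |Re μ|`. Since there is no `s²` term, any two of the three roots satisfy the relation of
`cone_of_sq`, so at most one root lies outside the cone. -/
lemma cubic_roots (N : ℝ) (q : ℂ) : ∃ a b c : ℂ,
    (∀ s : ℂ, s ^ 3 - (N : ℂ) ^ 2 * s + q = (s - a) * (s - b) * (s - c)) ∧
      ‖b‖ ≤ 2 * |b.re| ∧ ‖c‖ ≤ 2 * |c.re| := by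
  obtain ⟨r, hr⟩ : ∃ r : ℂ, r ^ 3 - (N : ℂ) ^ 2 * r + q = 0 := by
    have hdeg : (Polynomial.X ^ 3 + (Polynomial.C (-(N : ℂ) ^ 2) * Polynomial.X + Polynomial.C q)
        : Polynomial ℂ).degree = 3 := by
      rw [Polynomial.degree_add_eq_left_of_degree_lt]
      · simp
      · refine lt_of_le_of_lt Polynomial.degree_linear_le ?_
        simp
    obtain ⟨r, hr⟩ := IsAlgClosed.exists_root _ (by rw [hdeg]; norm_num)
    refine ⟨r, ?_⟩
    simp [Polynomial.IsRoot] at hr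
    linear_combination hr
  -- The other two roots solve `s² + r s + (r² - N²) = 0`, of discriminant `4 N² - 3 r²`.
  obtain ⟨d, hd⟩ := IsAlgClosed.exists_pow_nat_eq (4 * (N : ℂ) ^ 2 - 3 * r ^ 2) (n := 2) (by norm_num)
  set b := (-r + d) / 2 with hb
  set c := (-r - d) / 2 with hc
  have hsum : ∀ s : ℂ, s ^ 3 - (N : ℂ) ^ 2 * s + q = (s - r) * (s - b) * (s - c) := by
    intro s
    rw [hb, hc]
    linear_combination hr + (s - r) / 4 * hd
  have h1 : r ^ 2 + r * b + b ^ 2 = (N : ℂ) ^ 2 := by rw [hb]; linear_combination hd / 4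
  have h2 : r ^ 2 + r * c + c ^ 2 = (N : ℂ) ^ 2 := by rw [hc]; linear_combination hd / 4
  have h3 : b ^ 2 + b * c + c ^ 2 = (N : ℂ) ^ 2 := by rw [hb, hc]; linear_combination hd / 4
  rcases cone_of_sq h1 with ha | hB
  · rcases cone_of_sq h3 with hB | hC
    · exact ⟨c, r, b, fun s => by rw [hsum]; ring, ha, hB⟩
    · exact ⟨b, r, c, fun s => by rw [hsum]; ring, ha, hC⟩
  · rcases cone_of_sq h2 with ha | hC
    · exact ⟨c, r, b, fun s => by rw [hsum]; ring, ha, hB⟩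
    · exact ⟨r, b, c, hsum, hB, hC⟩

/-- The function `x ↦ ∫ e^{2πi x a} h(a) da`. -/
def W (h : ℝ → ℂ) (x : ℝ) : ℂ := ∫ a, ee (x * a) * h a

/-- The symbol `2πi a` of the derivative. -/
def sy (a : ℝ) : ℂ := ((2 * Real.pi * a : ℝ) : ℂ) * Complex.I

@[simp] lemma sy_re (a : ℝ) : (sy a).re = 0 := by simp [sy]

@[fun_prop] lemma continuous_sy : Continuous sy := by unfold sy; fun_prop

lemma norm_sy (a : ℝ) : ‖sy a‖ = 2 * Real.pi * |a| := by
  simp [sy, abs_of_pos Real.pi_pos]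

lemma norm_sy_le (a : ℝ) : ‖sy a‖ ≤ 8 * (1 + a ^ 2) := by
  rw [norm_sy]
  have : |a| ≤ 1 + a ^ 2 := by nlinarith [sq_abs a, sq_nonneg (|a| - 1), abs_nonneg a]
  have := Real.pi_lt_four
  have := Real.pi_pos
  nlinarith [abs_nonneg a]

/-- Continuous functions that are `O((1 + a²)⁻ⁿ)`; the decay class of Fourier-side functions. -/
def Dec (n : ℕ) (h : ℝ → ℂ) : Prop :=
  Continuous h ∧ ∃ C : ℝ, ∀ a, ‖h a‖ * (1 + a ^ 2) ^ n ≤ C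

lemma Dec.of_succ {n : ℕ} {h : ℝ → ℂ} (hh : Dec (n + 1) h) : Dec n h := by
  obtain ⟨hc, C, hC⟩ := hh
  refine ⟨hc, C, fun a => le_trans ?_ (hC a)⟩
  gcongr
  · nlinarith [sq_nonneg a]
  · omega

lemma Dec.sy_mul {n : ℕ} {h : ℝ → ℂ} (hh : Dec (n + 1) h) : Dec n (fun a => sy a * h a) := by
  obtain ⟨hc, C, hC⟩ := hh
  refine ⟨by fun_prop, 8 * C, fun a => ?_⟩
  rw [norm_mul]
  calc ‖sy a‖ * ‖h a‖ * (1 + a ^ 2) ^ n ≤ 8 * (1 + a ^ 2) * ‖h a‖ * (1 + a ^ 2) ^ n := by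
        gcongr; exact norm_sy_le a
    _ = 8 * (‖h a‖ * (1 + a ^ 2) ^ (n + 1)) := by ring
    _ ≤ _ := by linarith [hC a]

lemma sub_ne {μ : ℂ} (hμ : μ.re ≠ 0) (a : ℝ) : sy a - μ ≠ 0 := by
  intro h
  have := congrArg Complex.re h
  simp at this
  exact hμ this

lemma Dec.div {n : ℕ} {h : ℝ → ℂ} (hh : Dec n h) {μ : ℂ} (hμ : μ.re ≠ 0) :
    Dec n (fun a => h a / (sy a - μ)) := by
  obtain ⟨hc, C, hC⟩ := hh
  refine ⟨hc.div (by fun_prop) (sub_ne hμ), C / |μ.re|, fun a => ?_⟩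
  have h1 : |μ.re| ≤ ‖sy a - μ‖ := by
    have := Complex.abs_re_le_norm (sy a - μ)
    simpa using this
  have h2 : 0 < |μ.re| := abs_pos.2 hμ
  rw [norm_div, div_mul_eq_mul_div]
  exact div_le_div₀ (le_trans (by positivity) (hC a)) (hC a) h2 h1

lemma Dec.integrable {h : ℝ → ℂ} (hh : Dec 1 h) : Integrable h := by
  obtain ⟨hc, C, hC⟩ := hh
  refine Integrable.mono' (integrable_inv_one_add_sq.const_mul C) hc.aestronglyMeasurable
    (ae_of_all _ fun a => ?_)
  have := hC a
  rw [pow_one] at this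
  rw [← div_eq_mul_inv, le_div_iff₀ (by positivity)]
  exact this

lemma hasDerivAt_ee (a x : ℝ) : HasDerivAt (fun x : ℝ => ee (x * a)) (sy a * ee (x * a)) x := by
  unfold ee
  have h1 : HasDerivAt (fun x : ℝ => ((2 * Real.pi * (x * a) : ℝ) : ℂ) * Complex.I) (sy a) x := by
    have : HasDerivAt (fun x : ℝ => 2 * Real.pi * (x * a)) (2 * Real.pi * a) x := by
      simpa using ((hasDerivAt_id x).mul_const a).const_mul (2 * Real.pi)
    exact this.ofReal_comp.mul_const Complex.I
  convert! h1.cexp using 1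
  ring

lemma W_hasDerivAt {h : ℝ → ℂ} (hh : Dec 2 h) (x : ℝ) :
    HasDerivAt (W h) (W (fun a => sy a * h a) x) x := by
  have hi := hh.sy_mul.integrable
  have := hasDerivAt_integral_of_dominated_loc_of_deriv_le (μ := volume)
    (F := fun (x a : ℝ) => ee (x * a) * h a) (F' := fun x a => ee (x * a) * (sy a * h a))
    (bound := fun a => ‖sy a * h a‖) (x₀ := x) (s := Set.univ) univ_mem
    (Eventually.of_forall fun x => by
      have := hh.1; exact Continuous.aestronglyMeasurable (by fun_prop))
    (by
      refine hh.of_succ.integrable.bdd_mul (c := 1) (Continuous.aestronglyMeasurable (by fun_prop)) (ae_of_all _ fun a => by simp))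
    (by have := hh.1; exact Continuous.aestronglyMeasurable (by fun_prop))
    (ae_of_all _ fun a y _ => by simp)
    hi.norm
    (ae_of_all _ fun a y _ => by
      convert! (hasDerivAt_ee a y).mul_const (h a) using 1
      ring)
  exact this.2

lemma W_bound {h : ℝ → ℂ} (x : ℝ) : ‖W h x‖ ≤ ∫ a, ‖h a‖ := by
  refine (norm_integral_le_integral_norm _).trans (le_of_eq ?_)
  simp

lemma W_continuous {h : ℝ → ℂ} (hh : Dec 1 h) : Continuous (W h) := by
  refine continuous_of_dominated (bound := fun a => ‖h a‖) (fun x => ?_) (fun x => ?_)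
    hh.integrable.norm (ae_of_all _ fun a => by fun_prop)
  · have := hh.1; exact Continuous.aestronglyMeasurable (by fun_prop)
  · exact ae_of_all _ fun a => by simp

lemma W_eq {h : ℝ → ℂ} (hh : Dec 2 h) {μ : ℂ} (hμ : μ.re ≠ 0) (x : ℝ) :
    W (fun a => sy a * (h a / (sy a - μ))) x = μ * W (fun a => h a / (sy a - μ)) x + W h x := by
  have hd := hh.div hμ
  have i1 : ∀ {k : ℝ → ℂ}, Dec 1 k → Integrable fun a => ee (x * a) * k a := fun hk =>
    hk.integrable.bdd_mul (c := 1) (Continuous.aestronglyMeasurable (by fun_prop))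
      (ae_of_all _ fun a => by simp)
  unfold W
  rw [← integral_const_mul, ← integral_add ((i1 hd.of_succ).const_mul μ) (i1 hh.of_succ)]
  congr 1; ext a
  have := sub_ne hμ a
  field_simp
  ring

/-- Division by `sy a - μ` on the Fourier side inverts `∂ - μ`. -/
lemma W_ode {h : ℝ → ℂ} (hh : Dec 2 h) {μ : ℂ} (hμ : μ.re ≠ 0) (x : ℝ) :
    HasDerivAt (W (fun a => h a / (sy a - μ)))
      (μ * W (fun a => h a / (sy a - μ)) x + W h x) x := by
  rw [← W_eq hh hμ]
  exact W_hasDerivAt (hh.div hμ) x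

/-- For `μ` in the cone `|μ| ≤ 2 |Re μ|`, the operator `∂ (∂ - μ)⁻¹` is bounded on `L^∞` with
norm at most `3`. -/
lemma W_cone {h : ℝ → ℂ} (hh : Dec 2 h) {μ : ℂ} (hμ : μ.re ≠ 0) (hc : ‖μ‖ ≤ 2 * |μ.re|)
    {M : ℝ} (hM : ∀ x, ‖W h x‖ ≤ M) (x : ℝ) :
    ‖W (fun a => sy a * (h a / (sy a - μ))) x‖ ≤ 3 * M := by
  have h1 := ode_Linf hμ (W_ode hh hμ) (W_continuous hh.of_succ) (W_bound) hM x
  have h2 : 0 < |μ.re| := abs_pos.2 hμ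
  have hM0 : 0 ≤ M := (norm_nonneg _).trans (hM 0)
  rw [W_eq hh hμ]
  refine (norm_add_le _ _).trans ?_
  rw [norm_mul]
  have : ‖μ‖ * ‖W (fun a => h a / (sy a - μ)) x‖ ≤ (2 * |μ.re|) * (M / |μ.re|) := by gcongr
  have h3 : (2 * |μ.re|) * (M / |μ.re|) = 2 * M := by field_simp
  linarith [hM x]

/-- The resolvent bound: if `(∂³ - N² ∂ + q) u = W Γ`, then `‖u''‖_∞ ≤ 9 ‖W Γ‖_{L¹}`, uniformly
in the real number `N` and in `q` with `Re q ≠ 0`. Here `u` is given by its Fourier integral. -/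
lemma resolvent_bound {Γ : ℝ → ℂ} (hΓ : Dec 3 Γ) (hi : Integrable (W Γ)) (N : ℝ) (q : ℂ)
    (hq : q.re ≠ 0) (x : ℝ) :
    ‖W (fun a => sy a ^ 2 * (Γ a / (sy a ^ 3 - (N : ℂ) ^ 2 * sy a + q))) x‖
      ≤ 9 * ∫ y, ‖W Γ y‖ := by
  obtain ⟨a, b, c, hf, hb, hc⟩ := cubic_roots N q
  -- On the imaginary axis the cubic has real part `Re q`, so the roots stay off the axis.
  have hval : ∀ s : ℂ, s.re = 0 → s ^ 3 - (N : ℂ) ^ 2 * s + q ≠ 0 := by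
    intro s hs h0
    have := congrArg Complex.re h0
    simp [pow_succ, hs] at this
    exact hq this
  have hre : ∀ μ : ℂ, μ ^ 3 - (N : ℂ) ^ 2 * μ + q = 0 → μ.re ≠ 0 := fun μ h0 h1 => hval μ h1 h0
  have ha' : a.re ≠ 0 := hre a (by rw [hf]; ring)
  have hb' : b.re ≠ 0 := hre b (by rw [hf]; ring)
  have hc' : c.re ≠ 0 := hre c (by rw [hf]; ring)
  have d1 := hΓ.div ha'
  have s1 : ∀ x, ‖W (fun t => Γ t / (sy t - a)) x‖ ≤ ∫ y, ‖W Γ y‖ :=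
    ode_L1 ha' (W_ode hΓ.of_succ ha') (W_continuous hΓ.of_succ.of_succ) W_bound hi
  have s2 := W_cone d1.of_succ hb' hb s1
  have s3 := W_cone (d1.div hb').sy_mul hc' hc s2 x
  refine le_trans (le_of_eq ?_) (s3.trans (by linarith))
  congr 2; ext t
  rw [hf]
  have := sub_ne ha' t
  have := sub_ne hb' t
  have := sub_ne hc' t
  field_simp

/-! ### Admissible sources and their partial Fourier transforms -/

/-- The weight `(1 + s²)⁻¹`. -/
def wt (s : ℝ) : ℝ := (1 + s ^ 2)⁻¹

lemma wt_pos (s : ℝ) : 0 < wt s := by unfold wt; positivity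
lemma wt_nonneg (s : ℝ) : 0 ≤ wt s := (wt_pos s).le
lemma wt_le_one (s : ℝ) : wt s ≤ 1 := by
  unfold wt; exact inv_le_one_of_one_le₀ (by nlinarith [sq_nonneg s])
@[fun_prop] lemma continuous_wt : Continuous wt := by
  unfold wt; exact Continuous.inv₀ (by fun_prop) (fun s => by positivity)
lemma integrable_wt : Integrable wt := integrable_inv_one_add_sq

/-- Sources for which the Fourier-side argument applies: `g τ y z` is a function of time and of the
space variables `x₁ = y`, `x₂ = z`, jointly continuous and, uniformly in time, decaying in space;
`G τ a b` is its spatial Fourier transform, which decays fast enough in `a` to allow two derivatives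
in `x₁`. One constant `K` serves both bounds, and `0 ≤ T ≤ 1`. -/
structure Adm (T K : ℝ) (g G : ℝ → ℝ → ℝ → ℂ) : Prop where
  T0 : 0 ≤ T
  T1 : T ≤ 1
  K0 : 0 ≤ K
  gc : Continuous fun p : ℝ × ℝ × ℝ => g p.1 p.2.1 p.2.2
  gb : ∀ τ y z, ‖g τ y z‖ ≤ K * (wt y * wt z)
  Gdef : ∀ τ a b, G τ a b = ∫ y, ee (-(y * a)) * ∫ z, ee (-(z * b)) * g τ y z
  Gb : ∀ τ a b, ‖G τ a b‖ ≤ K * (wt a ^ 3 * wt b)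

/-- The partial Fourier transform of `g` in the last variable. -/
def g2 (g : ℝ → ℝ → ℝ → ℂ) (τ y b : ℝ) : ℂ := ∫ z, ee (-(z * b)) * g τ y z

/-- The Fourier transform, in time and in `x₂`, of the damped source `1_{(0,T]}(τ) e^{-τ} g(τ)`, at
time frequency `l`, `x₂` frequency `b` and position `x₁ = y`. -/
def gam (T : ℝ) (g : ℝ → ℝ → ℝ → ℂ) (l b y : ℝ) : ℂ :=
  ∫ τ in Set.Ioc 0 T, ee (-(τ * l)) * (Real.exp (-τ) * g2 g τ y b)

/-- The counterpart of `gam` with `x₁` also transformed, `a` being the `x₁` frequency. -/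
def Gam (T : ℝ) (G : ℝ → ℝ → ℝ → ℂ) (l b a : ℝ) : ℂ :=
  ∫ τ in Set.Ioc 0 T, ee (-(τ * l)) * (Real.exp (-τ) * G τ a b)

/-- The Duhamel integral on the Fourier side, with the source restricted to `(0, T]`. It is
defined for all real `t` and vanishes for `t ≤ 0`; for `t > T` it is the free evolution. -/
def HH (T : ℝ) (G : ℝ → ℝ → ℝ → ℂ) (t a b : ℝ) : ℂ :=
  ∫ τ in Set.Ioc 0 T, if τ ≤ t then
    Complex.exp (Complex.I * (((t - τ) * a * (a ^ 2 + b ^ 2) : ℝ) : ℂ)) * G τ a b else 0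

/-- The transform in `x₂` of the second `x₁` derivative of the Duhamel term: the inverse Fourier integral
in the `x₁` frequency of `(2πi a)² HH`. -/
def AA (T : ℝ) (G : ℝ → ℝ → ℝ → ℂ) (t x b : ℝ) : ℂ :=
  ∫ a, ee (x * a) * (sy a ^ 2 * HH T G t a b)

namespace Adm
variable {T K : ℝ} {g G : ℝ → ℝ → ℝ → ℂ} (h : Adm T K g G)
include h

lemma g2_bound (τ y b : ℝ) : ‖g2 g τ y b‖ ≤ K * (∫ z, wt z) * wt y := by
  unfold g2
  refine (norm_integral_le_of_norm_le ((integrable_wt.const_mul (wt y)).const_mul K)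
    (ae_of_all _ fun z => ?_)).trans (le_of_eq ?_)
  · rw [norm_mul, norm_ee, one_mul]; exact h.gb τ y z
  · rw [integral_const_mul, integral_const_mul]; ring

lemma g2_cont : Continuous fun p : ℝ × ℝ × ℝ => g2 g p.1 p.2.1 p.2.2 := by
  have := h.gc
  unfold g2
  refine continuous_of_dominated (bound := fun z => K * wt z) (fun p => ?_) (fun p => ?_)
    (integrable_wt.const_mul _) (ae_of_all _ fun z => ?_)
  · apply Continuous.aestronglyMeasurable
    have : Continuous fun z => g p.1 p.2.1 z := h.gc.comp (g := fun p : ℝ × ℝ × ℝ => g p.1 p.2.1 p.2.2)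
      (f := fun z => (p.1, p.2.1, z)) (by fun_prop)
    fun_prop
  · refine ae_of_all _ fun z => ?_
    rw [norm_mul, norm_ee, one_mul]
    refine (h.gb _ _ _).trans (mul_le_mul_of_nonneg_left ?_ h.K0)
    exact mul_le_of_le_one_left (wt_nonneg _) (wt_le_one _)
  · have : Continuous fun p : ℝ × ℝ × ℝ => g p.1 p.2.1 z := h.gc.comp (g := fun p : ℝ × ℝ × ℝ => g p.1 p.2.1 p.2.2)
      (f := fun p : ℝ × ℝ × ℝ => (p.1, p.2.1, z)) (by fun_prop)
    fun_prop

lemma g2_cont' {X : Type*} [TopologicalSpace X] {f1 f2 f3 : X → ℝ} (h1 : Continuous f1)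
    (h2 : Continuous f2) (h3 : Continuous f3) : Continuous fun x => g2 g (f1 x) (f2 x) (f3 x) :=
  h.g2_cont.comp (h1.prodMk (h2.prodMk h3))

lemma G_eq (τ a b : ℝ) : G τ a b = ∫ y, ee (-(y * a)) * g2 g τ y b := h.Gdef τ a b

lemma G_cont : Continuous fun p : ℝ × ℝ × ℝ => G p.1 p.2.1 p.2.2 := by
  simp_rw [h.G_eq]
  refine continuous_of_dominated (bound := fun y => K * (∫ z, wt z) * wt y) (fun p => ?_)
    (fun p => ?_) (integrable_wt.const_mul _) (ae_of_all _ fun y => ?_)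
  · apply Continuous.aestronglyMeasurable
    have : Continuous fun y => g2 g p.1 y p.2.2 := h.g2_cont' (by fun_prop) (by fun_prop) (by fun_prop)
    fun_prop
  · refine ae_of_all _ fun y => ?_
    rw [norm_mul, norm_ee, one_mul]
    exact h.g2_bound _ _ _
  · have : Continuous fun p : ℝ × ℝ × ℝ => g2 g p.1 y p.2.2 :=
      h.g2_cont' (by fun_prop) (by fun_prop) (by fun_prop)
    fun_prop

lemma G_cont' {X : Type*} [TopologicalSpace X] {f1 f2 f3 : X → ℝ} (h1 : Continuous f1)
    (h2 : Continuous f2) (h3 : Continuous f3) : Continuous fun x => G (f1 x) (f2 x) (f3 x) :=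
  h.G_cont.comp (h1.prodMk (h2.prodMk h3))

omit h in
lemma setInt_cont {X : Type*} [TopologicalSpace X] (hT : 0 ≤ T) {f : X → ℝ → ℂ}
    (hf : Continuous (Function.uncurry f)) : Continuous fun x => ∫ τ in Set.Ioc 0 T, f x τ := by
  simp_rw [← intervalIntegral.integral_of_le hT]
  exact intervalIntegral.continuous_parametric_intervalIntegral_of_continuous' hf 0 T

lemma setInt_bound {f : ℝ → ℂ} {M : ℝ} (hM : 0 ≤ M) (hf : ∀ τ ∈ Set.Ioc 0 T, ‖f τ‖ ≤ M) :
    ‖∫ τ in Set.Ioc 0 T, f τ‖ ≤ M := by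
  refine (norm_setIntegral_le_of_norm_le_const (by simp) hf).trans ?_
  rw [measureReal_def, Real.volume_Ioc, sub_zero, ENNReal.toReal_ofReal h.T0]
  exact mul_le_of_le_one_right hM h.T1

omit h in
lemma exp_mul_bound {τ l : ℝ} (hτ : 0 < τ) {z : ℂ} {M : ℝ} (hz : ‖z‖ ≤ M) :
    ‖ee (-(τ * l)) * (Real.exp (-τ) * z)‖ ≤ M := by
  rw [norm_mul, norm_ee, one_mul, norm_mul, Complex.norm_real, Real.norm_eq_abs, Real.abs_exp]
  exact (mul_le_of_le_one_left (norm_nonneg _) (Real.exp_le_one_iff.2 (by linarith))).trans hz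

lemma c_nonneg : 0 ≤ K * (∫ z, wt z) := mul_nonneg h.K0 (integral_nonneg wt_nonneg)

lemma gam_bound (l b y : ℝ) : ‖gam T g l b y‖ ≤ K * (∫ z, wt z) * wt y :=
  h.setInt_bound (mul_nonneg h.c_nonneg (wt_nonneg _)) fun _ hτ =>
    exp_mul_bound hτ.1 (h.g2_bound _ _ _)

lemma gam_cont : Continuous fun p : ℝ × ℝ × ℝ => gam T g p.1 p.2.1 p.2.2 := by
  unfold gam
  apply setInt_cont h.T0
  have := h.g2_cont' (X := (ℝ × ℝ × ℝ) × ℝ) (f1 := fun p => p.2) (f2 := fun p => p.1.2.2)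
    (f3 := fun p => p.1.2.1) (by fun_prop) (by fun_prop) (by fun_prop)
  unfold Function.uncurry
  fun_prop

lemma gam_cont1 (l b : ℝ) : Continuous (gam T g l b) :=
  h.gam_cont.comp (g := fun p : ℝ × ℝ × ℝ => gam T g p.1 p.2.1 p.2.2) (f := fun y => (l, b, y))
    (by fun_prop)

lemma gam_int (l b : ℝ) : Integrable (gam T g l b) :=
  Integrable.mono' (integrable_wt.const_mul _) (h.gam_cont1 l b).aestronglyMeasurable
    (ae_of_all _ (h.gam_bound l b))

lemma Gam_dec (l b : ℝ) : Dec 3 (Gam T G l b) := by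
  refine ⟨?_, K, fun a => ?_⟩
  · unfold Gam
    apply setInt_cont h.T0
    have := h.G_cont' (X := ℝ × ℝ) (f1 := fun p => p.2) (f2 := fun p => p.1)
      (f3 := fun p => b) (by fun_prop) (by fun_prop) (by fun_prop)
    unfold Function.uncurry
    exact Continuous.mul (by fun_prop) (Continuous.mul (by fun_prop) this)
  · have : ‖Gam T G l b a‖ ≤ K * wt a ^ 3 :=
      h.setInt_bound (mul_nonneg h.K0 (pow_nonneg (wt_nonneg _) _)) fun τ hτ =>
        exp_mul_bound hτ.1 ((h.Gb τ a b).trans (mul_le_mul_of_nonneg_left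
          (mul_le_of_le_one_right (pow_nonneg (wt_nonneg _) _) (wt_le_one _)) h.K0))
    calc _ ≤ K * wt a ^ 3 * (1 + a ^ 2) ^ 3 := by gcongr
      _ = K := by unfold wt; field_simp

lemma fourier_gam (l b a : ℝ) : ∫ y, ee (-(y * a)) * gam T g l b y = Gam T G l b a := by
  unfold gam Gam
  simp_rw [← integral_const_mul]
  rw [integral_integral_swap]
  · congr 1; ext τ
    rw [h.G_eq, ← integral_const_mul, ← integral_const_mul]
    congr 1; ext y; ring
  · have hb : Integrable (fun p : ℝ × ℝ => (K * (∫ z, wt z) * wt p.1) * (1:ℝ))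
        (volume.prod (volume.restrict (Set.Ioc 0 T))) :=
      (integrable_wt.const_mul (K * ∫ z, wt z)).mul_prod (integrable_const (1:ℝ))
    refine hb.mono' (Continuous.aestronglyMeasurable ?_) ?_
    · have := h.g2_cont' (X := ℝ × ℝ) (f1 := fun p => p.2) (f2 := fun p => p.1)
        (f3 := fun p => b) (by fun_prop) (by fun_prop) (by fun_prop)
      unfold Function.uncurry
      fun_prop
    · have : ∀ᵐ p : ℝ × ℝ ∂(volume.prod (volume.restrict (Set.Ioc 0 T))), p.2 ∈ Set.Ioc 0 T :=
        Measure.quasiMeasurePreserving_snd.ae (ae_restrict_mem measurableSet_Ioc)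
      filter_upwards [this] with p hp
      simp only [Function.uncurry, mul_one]
      rw [norm_mul, norm_ee, one_mul]
      exact exp_mul_bound hp.1 (h.g2_bound _ _ _)

open scoped FourierTransform in
/-- Fourier inversion in `x₁`, which identifies the right-hand side of the resolvent equation. -/
lemma W_Gam (l b y : ℝ) : W (Gam T G l b) y = gam T g l b y := by
  have h1 : 𝓕 (gam T g l b) = Gam T G l b := by
    ext a; rw [fourier_eq_ee]; exact h.fourier_gam l b a
  have h2 := (h.gam_cont1 l b).fourierInv_fourier_eq (h.gam_int l b)
    (by rw [h1]; exact (h.Gam_dec l b).of_succ.of_succ.integrable)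
  rw [h1] at h2
  rw [← congrFun h2 y, fourierInv_eq_ee]
  unfold W
  congr 1; ext a; rw [mul_comm a y]

end Adm

/-! ### Laplace transform of the Duhamel term in time -/

namespace Adm
variable {T K : ℝ} {g G : ℝ → ℝ → ℝ → ℂ} (h : Adm T K g G)
include h

omit h in
lemma norm_phase (r : ℝ) (z : ℂ) : ‖Complex.exp (Complex.I * (r : ℂ)) * z‖ = ‖z‖ := by
  rw [norm_mul, mul_comm Complex.I, Complex.norm_exp_ofReal_mul_I, one_mul]

lemma HH_integrand_bound (t τ a b : ℝ) : ‖(if τ ≤ t then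
    Complex.exp (Complex.I * (((t - τ) * a * (a ^ 2 + b ^ 2) : ℝ) : ℂ)) * G τ a b else 0)‖
      ≤ K * (wt a ^ 3 * wt b) := by
  split_ifs
  · rw [norm_phase]; exact h.Gb τ a b
  · rw [norm_zero]
    exact mul_nonneg h.K0 (mul_nonneg (pow_nonneg (wt_nonneg _) _) (wt_nonneg _))

lemma HH_bound (t a b : ℝ) : ‖HH T G t a b‖ ≤ K * (wt a ^ 3 * wt b) :=
  h.setInt_bound (mul_nonneg h.K0 (mul_nonneg (pow_nonneg (wt_nonneg _) _) (wt_nonneg _)))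
    fun τ _ => h.HH_integrand_bound t τ a b

omit h in
lemma HH_zero {t : ℝ} (ht : t ≤ 0) (a b : ℝ) : HH T G t a b = 0 := by
  unfold HH
  rw [setIntegral_congr_fun (g := fun _ => 0) measurableSet_Ioc, integral_zero]
  intro τ hτ
  exact if_neg (by linarith [hτ.1])

omit h in
lemma AA_zero {t : ℝ} (ht : t ≤ 0) (x b : ℝ) : AA T G t x b = 0 := by
  unfold AA
  simp [HH_zero ht]

lemma meas_integrand : Measurable fun p : (ℝ × ℝ × ℝ) × ℝ => if p.2 ≤ p.1.1 then
    Complex.exp (Complex.I * (((p.1.1 - p.2) * p.1.2.1 * (p.1.2.1 ^ 2 + p.1.2.2 ^ 2) : ℝ) : ℂ))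
      * G p.2 p.1.2.1 p.1.2.2 else 0 := by
  refine Measurable.ite (measurableSet_le (by fun_prop) (by fun_prop)) ?_ measurable_const
  have := h.G_cont' (X := (ℝ × ℝ × ℝ) × ℝ) (f1 := fun p => p.2) (f2 := fun p => p.1.2.1)
      (f3 := fun p => p.1.2.2) (by fun_prop) (by fun_prop) (by fun_prop)
  exact (Continuous.mul (by fun_prop) this).measurable

lemma HH_meas : StronglyMeasurable fun p : ℝ × ℝ × ℝ => HH T G p.1 p.2.1 p.2.2 := by
  unfold HH
  exact StronglyMeasurable.integral_prod_right' (f := fun p : (ℝ × ℝ × ℝ) × ℝ => if p.2 ≤ p.1.1 then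
    Complex.exp (Complex.I * (((p.1.1 - p.2) * p.1.2.1 * (p.1.2.1 ^ 2 + p.1.2.2 ^ 2) : ℝ) : ℂ))
      * G p.2 p.1.2.1 p.1.2.2 else 0) h.meas_integrand.stronglyMeasurable

lemma HH_meas' {X : Type*} [MeasurableSpace X] {f1 f2 f3 : X → ℝ} (h1 : Measurable f1)
    (h2 : Measurable f2) (h3 : Measurable f3) :
    StronglyMeasurable fun x => HH T G (f1 x) (f2 x) (f3 x) :=
  h.HH_meas.comp_measurable (h1.prodMk (h2.prodMk h3))

lemma symHH_bound (t a b : ℝ) : ‖sy a ^ 2 * HH T G t a b‖ ≤ 64 * K * wt b * wt a := by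
  rw [norm_mul, norm_pow]
  calc ‖sy a‖ ^ 2 * ‖HH T G t a b‖ ≤ (8 * (1 + a ^ 2)) ^ 2 * (K * (wt a ^ 3 * wt b)) := by
        gcongr
        · exact norm_sy_le a
        · exact h.HH_bound t a b
    _ = 64 * K * wt b * wt a := by unfold wt; field_simp; ring

lemma AA_integrand_bound (t x a b : ℝ) :
    ‖ee (x * a) * (sy a ^ 2 * HH T G t a b)‖ ≤ 64 * K * wt b * wt a := by
  rw [norm_mul, norm_ee, one_mul]; exact h.symHH_bound t a b

lemma AA_bound (t x b : ℝ) : ‖AA T G t x b‖ ≤ 64 * K * (∫ a, wt a) * wt b := by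
  unfold AA
  refine (norm_integral_le_of_norm_le (integrable_wt.const_mul (64 * K * wt b))
    (ae_of_all _ fun a => h.AA_integrand_bound t x a b)).trans (le_of_eq ?_)
  rw [integral_const_mul]; ring

lemma AA_meas (x : ℝ) : StronglyMeasurable fun p : ℝ × ℝ => AA T G p.1 x p.2 := by
  unfold AA
  refine StronglyMeasurable.integral_prod_right'
    (f := fun q : (ℝ × ℝ) × ℝ => ee (x * q.2) * (sy q.2 ^ 2 * HH T G q.1.1 q.2 q.1.2)) ?_
  refine (Continuous.stronglyMeasurable (by fun_prop)).mul
    ((Continuous.stronglyMeasurable (by fun_prop)).mul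
      (h.HH_meas' (by fun_prop) (by fun_prop) (by fun_prop)))

omit h in
lemma integrable_expInd : Integrable ((Set.Ioi (0:ℝ)).indicator fun t => Real.exp (-t)) := by
  rw [integrable_indicator_iff measurableSet_Ioi]
  simpa using integrableOn_exp_mul_Ioi (a := -1) (by norm_num) 0

lemma expAA_bound (x b t : ℝ) : ‖(Real.exp (-t) : ℂ) * AA T G t x b‖ ≤
    (64 * K * (∫ a, wt a) * wt b) * (Set.Ioi (0:ℝ)).indicator (fun t => Real.exp (-t)) t := by
  by_cases ht : 0 < t
  · rw [Set.indicator_of_mem (by exact ht), norm_mul, Complex.norm_real, Real.norm_eq_abs,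
      Real.abs_exp, mul_comm]
    exact mul_le_mul_of_nonneg_right (h.AA_bound t x b) (Real.exp_nonneg _)
  · rw [AA_zero (not_lt.1 ht), mul_zero, norm_zero, Set.indicator_of_notMem (by exact ht), mul_zero]

omit h in
lemma memLp_two_of_bound {f : ℝ → ℂ} (hi : Integrable f) {C : ℝ} (hC : ∀ x, ‖f x‖ ≤ C) :
    MemLp f 2 := by
  rw [memLp_two_iff_integrable_sq_norm hi.aestronglyMeasurable]
  refine Integrable.mono' (hi.norm.const_mul C) (by fun_prop) (ae_of_all _ fun x => ?_)
  rw [Real.norm_eq_abs, abs_of_nonneg (by positivity), sq]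
  exact mul_le_mul_of_nonneg_right (hC x) (norm_nonneg _)

lemma expAA_int (x b : ℝ) : Integrable fun t => (Real.exp (-t) : ℂ) * AA T G t x b := by
  refine Integrable.mono' (integrable_expInd.const_mul _) ?_ (ae_of_all _ (h.expAA_bound x b))
  refine StronglyMeasurable.aestronglyMeasurable ?_
  refine (Continuous.stronglyMeasurable (by fun_prop)).mul ?_
  exact (h.AA_meas x).comp_measurable (g := fun t : ℝ => (t, b)) (by fun_prop)

lemma plancherel_AA_t (x b : ℝ) :
    ∫⁻ t, ‖(Real.exp (-t) : ℂ) * AA T G t x b‖ₑ ^ 2 =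
      ∫⁻ l, ‖∫ t, ee (-(t * l)) * ((Real.exp (-t) : ℂ) * AA T G t x b)‖ₑ ^ 2 := by
  refine (plancherel _ (h.expAA_int x b) (memLp_two_of_bound (C := 64 * K * (∫ a, wt a) * wt b)
    (h.expAA_int x b) fun t => ?_)).symm
  refine (h.expAA_bound x b t).trans (mul_le_of_le_one_right ?_ ?_)
  · exact (norm_nonneg _).trans (h.AA_bound 0 0 b)
  · refine Set.indicator_le' (fun t ht => ?_) (fun _ _ => zero_le_one) t
    exact Real.exp_le_one_iff.2 (by simpa using (Set.mem_Ioi.1 ht).le)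

lemma plancherel_AA_b (x t : ℝ) :
    ∫⁻ z, ‖∫ b, ee (z * b) * AA T G t x b‖ₑ ^ 2 = ∫⁻ b, ‖AA T G t x b‖ₑ ^ 2 := by
  have hi : Integrable (AA T G t x) := by
    refine Integrable.mono' (integrable_wt.const_mul _) ?_ (ae_of_all _ (h.AA_bound t x))
    exact ((h.AA_meas x).comp_measurable (g := fun b : ℝ => (t, b)) (by fun_prop)).aestronglyMeasurable
  rw [← plancherel_inv _ hi (memLp_two_of_bound (C := 64 * K * (∫ a, wt a)) hi fun b => ?_)]
  · simp_rw [mul_comm]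
  · refine (h.AA_bound t x b).trans (mul_le_of_le_one_right ?_ (wt_le_one _))
    exact mul_nonneg (mul_nonneg (by norm_num) h.K0) (integral_nonneg wt_nonneg)

/-- The Laplace transform of `HH` in time at the point `1 + 2πil`: a convolution in time becomes a
product, with the symbol of the resolvent of the linear Zakharov–Kuznetsov operator. -/
lemma laplace_HH (l a b : ℝ) :
    ∫ t, ee (-(t * l)) * ((Real.exp (-t) : ℂ) * HH T G t a b) =
      Gam T G l b a / (1 + sy l - Complex.I * ((a * (a ^ 2 + b ^ 2) : ℝ) : ℂ)) := by
  set c : ℂ := 1 + sy l - Complex.I * ((a * (a ^ 2 + b ^ 2) : ℝ) : ℂ) with hc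
  have hcre : c.re = 1 := by
    rw [hc, Complex.sub_re, Complex.add_re, sy_re, Complex.I_mul_re, Complex.ofReal_im]; simp
  unfold HH Gam
  simp_rw [← integral_const_mul]
  rw [integral_integral_swap, ← integral_div]
  · refine setIntegral_congr_fun measurableSet_Ioc fun τ hτ => ?_
    have h1 : ∀ t : ℝ, ee (-(t * l)) * ((Real.exp (-t) : ℂ) * (if τ ≤ t then
        Complex.exp (Complex.I * (((t - τ) * a * (a ^ 2 + b ^ 2) : ℝ) : ℂ)) * G τ a b else 0)) =
        (Set.Ici τ).indicator (fun t : ℝ => (ee (-(τ * l)) * (Real.exp (-τ) * G τ a b) *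
          Complex.exp (c * τ)) * Complex.exp (-c * t)) t := by
      intro t
      by_cases ht : τ ≤ t
      · rw [if_pos ht, Set.indicator_of_mem (by exact ht)]
        have : ee (-(t * l)) * (Real.exp (-t) : ℂ) *
            Complex.exp (Complex.I * (((t - τ) * a * (a ^ 2 + b ^ 2) : ℝ) : ℂ)) =
            ee (-(τ * l)) * Real.exp (-τ) * Complex.exp (c * τ) * Complex.exp (-c * t) := by
          unfold ee
          rw [Complex.ofReal_exp, Complex.ofReal_exp]
          simp only [← Complex.exp_add]
          congr 1
          rw [hc]; unfold sy
          push_cast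
          ring
        linear_combination (G τ a b) * this
      · rw [if_neg ht, Set.indicator_of_notMem (by exact ht)]
        simp
    simp_rw [h1]
    rw [integral_indicator measurableSet_Ici, integral_Ici_eq_integral_Ioi, integral_const_mul,
      integral_exp_mul_complex_Ioi (by simp [hcre])]
    have hc0 : c ≠ 0 := by intro h0; rw [h0] at hcre; simp at hcre
    have : Complex.exp (c * τ) * Complex.exp (-(c * τ)) = 1 := by
      rw [← Complex.exp_add]; simp
    field_simp
    linear_combination (ee (-(τ * l)) * G τ a b) * this
  · have hb : Integrable (fun p : ℝ × ℝ => ((Set.Ioi (0:ℝ)).indicator (fun t => Real.exp (-t)) p.1)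
        * (K * (wt a ^ 3 * wt b))) (volume.prod (volume.restrict (Set.Ioc 0 T))) :=
      integrable_expInd.mul_prod (integrable_const _)
    refine hb.mono' ?_ ?_
    · refine Measurable.aestronglyMeasurable ?_
      refine Measurable.mul (by fun_prop) (Measurable.mul (by fun_prop) ?_)
      exact h.meas_integrand.comp (f := fun p : ℝ × ℝ => ((p.1, a, b), p.2)) (by fun_prop)
    · have : ∀ᵐ p : ℝ × ℝ ∂(volume.prod (volume.restrict (Set.Ioc 0 T))), p.2 ∈ Set.Ioc 0 T :=
        Measure.quasiMeasurePreserving_snd.ae (ae_restrict_mem measurableSet_Ioc)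
      filter_upwards [this] with p hp
      simp only [Function.uncurry]
      by_cases ht : 0 < p.1
      · rw [norm_mul, norm_ee, one_mul, norm_mul, Complex.norm_real, Real.norm_eq_abs,
          Real.abs_exp, Set.indicator_of_mem (by exact ht)]
        exact mul_le_mul_of_nonneg_left (h.HH_integrand_bound _ _ _ _) (Real.exp_nonneg _)
      · rw [if_neg (by linarith [hp.1]), Set.indicator_of_notMem (by exact ht)]
        simp

/-- The Laplace transform in time of `AA` is the second `x₁` derivative of the resolvent applied to
`Gam`. -/
lemma laplace_AA (l x b : ℝ) :
    ∫ t, ee (-(t * l)) * ((Real.exp (-t) : ℂ) * AA T G t x b) =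
      W (fun a => sy a ^ 2 *
        (Gam T G l b a / (1 + sy l - Complex.I * ((a * (a ^ 2 + b ^ 2) : ℝ) : ℂ)))) x := by
  unfold AA W
  simp_rw [← integral_const_mul]
  rw [integral_integral_swap]
  · congr 1; ext a
    rw [← h.laplace_HH, ← integral_const_mul, ← integral_const_mul]
    congr 1; ext t; ring
  · have hb : Integrable (fun p : ℝ × ℝ => ((Set.Ioi (0:ℝ)).indicator (fun t => Real.exp (-t)) p.1)
        * (64 * K * wt b * wt p.2)) (volume.prod volume) :=
      integrable_expInd.mul_prod (integrable_wt.const_mul _)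
    refine hb.mono' ?_ (ae_of_all _ fun p => ?_)
    · refine StronglyMeasurable.aestronglyMeasurable ?_
      refine (Continuous.stronglyMeasurable (by fun_prop)).mul
        ((Continuous.stronglyMeasurable (by fun_prop)).mul
        ((Continuous.stronglyMeasurable (by fun_prop)).mul
        ((Continuous.stronglyMeasurable (by fun_prop)).mul
          (h.HH_meas' (by fun_prop) (by fun_prop) (by fun_prop)))))
    · simp only [Function.uncurry]
      by_cases ht : 0 < p.1
      · rw [norm_mul, norm_ee, one_mul, norm_mul, Complex.norm_real, Real.norm_eq_abs,
          Real.abs_exp, Set.indicator_of_mem (by exact ht)]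
        exact mul_le_mul_of_nonneg_left (h.AA_integrand_bound _ _ _ _) (Real.exp_nonneg _)
      · rw [HH_zero (not_lt.1 ht), Set.indicator_of_notMem (by exact ht)]
        simp

/-- The `L¹_{x₁} → L^∞_{x₁}` bound at a fixed time frequency `l` and `x₂` frequency `b`. -/
lemma pointwise_bound (l x b : ℝ) :
    ‖∫ t, ee (-(t * l)) * ((Real.exp (-t) : ℂ) * AA T G t x b)‖ ≤
      72 * Real.pi ^ 3 * ∫ y, ‖gam T g l b y‖ := by
  rw [h.laplace_AA]
  have hW : W (Gam T G l b) = gam T g l b := funext (h.W_Gam l b)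
  have key := resolvent_bound (h.Gam_dec l b) (by rw [hW]; exact h.gam_int l b)
    (2 * Real.pi * b) (8 * Real.pi ^ 3 * (1 + sy l)) (by
      have : ((8 * Real.pi ^ 3 * (1 + sy l) : ℂ)).re = 8 * Real.pi ^ 3 := by
        have : (8 * Real.pi ^ 3 * (1 + sy l) : ℂ) = ((8 * Real.pi ^ 3 : ℝ) : ℂ) * (1 + sy l) := by
          push_cast; ring
        rw [this, Complex.re_ofReal_mul]
        simp
      rw [this]; positivity) x
  rw [hW] at key
  -- In terms of `s = 2πi a`, the denominator is `(s³ - N² s + q) / (8π³)`.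
  have e1 : W (fun a => sy a ^ 2 *
        (Gam T G l b a / (1 + sy l - Complex.I * ((a * (a ^ 2 + b ^ 2) : ℝ) : ℂ)))) x =
      ((8 * Real.pi ^ 3 : ℝ) : ℂ) * W (fun a => sy a ^ 2 * (Gam T G l b a / (sy a ^ 3 -
        ((2 * Real.pi * b : ℝ) : ℂ) ^ 2 * sy a + 8 * Real.pi ^ 3 * (1 + sy l)))) x := by
    unfold W
    rw [← integral_const_mul]
    congr 1; ext a
    have : sy a ^ 3 - ((2 * Real.pi * b : ℝ) : ℂ) ^ 2 * sy a + 8 * Real.pi ^ 3 * (1 + sy l) =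
        ((8 * Real.pi ^ 3 : ℝ) : ℂ) *
          (1 + sy l - Complex.I * ((a * (a ^ 2 + b ^ 2) : ℝ) : ℂ)) := by
      have hI : Complex.I ^ 3 = -Complex.I := by rw [pow_succ, Complex.I_sq]; ring
      unfold sy
      push_cast
      linear_combination (8 * Real.pi ^ 3 * a ^ 3 : ℂ) * hI
    beta_reduce
    rw [this]
    have hpi : ((8 * Real.pi ^ 3 : ℝ) : ℂ) ≠ 0 := by
      rw [Complex.ofReal_ne_zero]; positivity
    rw [← div_div, div_right_comm]
    field_simp
  rw [e1, norm_mul, Complex.norm_real, Real.norm_eq_abs, abs_of_pos (by positivity)]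
  have := mul_le_mul_of_nonneg_left key (show 0 ≤ 8 * Real.pi ^ 3 by positivity)
  linarith

end Adm

/-! ### The smoothing estimate on the Fourier side -/

namespace Adm
variable {T K : ℝ} {g G : ℝ → ℝ → ℝ → ℂ} (h : Adm T K g G)
include h

/-- Plancherel in time for the damped and truncated source. -/
lemma gam_plancherel (b y : ℝ) :
    ∫⁻ l, ‖gam T g l b y‖ₑ ^ 2 ≤ ∫⁻ τ in Set.Icc 0 T, ‖g2 g τ y b‖ₑ ^ 2 := by
  set f : ℝ → ℂ := (Set.Ioc 0 T).indicator fun τ => (Real.exp (-τ) : ℂ) * g2 g τ y b with hf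
  have hc : Continuous fun τ => g2 g τ y b := h.g2_cont' (by fun_prop) (by fun_prop) (by fun_prop)
  have hb : ∀ τ, ‖f τ‖ ≤ (K * (∫ z, wt z) * wt y) := by
    intro τ
    by_cases hτ : τ ∈ Set.Ioc 0 T
    · rw [hf, Set.indicator_of_mem hτ]
      have := exp_mul_bound (l := 0) hτ.1 (h.g2_bound τ y b)
      rwa [norm_mul, norm_ee, one_mul] at this
    · rw [hf, Set.indicator_of_notMem hτ, norm_zero]
      exact mul_nonneg h.c_nonneg (wt_nonneg _)
  have hi : Integrable f := by
    rw [hf, integrable_indicator_iff measurableSet_Ioc]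
    exact (Continuous.integrableOn_Icc (by fun_prop)).mono_set Set.Ioc_subset_Icc_self
  have h1 : ∀ l, gam T g l b y = ∫ τ, ee (-(τ * l)) * f τ := by
    intro l
    unfold gam
    rw [← integral_indicator measurableSet_Ioc]
    congr 1; ext τ
    by_cases hτ : τ ∈ Set.Ioc 0 T
    · rw [hf, Set.indicator_of_mem hτ, Set.indicator_of_mem hτ]
    · rw [hf, Set.indicator_of_notMem hτ, Set.indicator_of_notMem hτ, mul_zero]
  simp_rw [h1]
  rw [plancherel f hi (memLp_two_of_bound hi hb), ← lintegral_indicator measurableSet_Icc]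
  refine lintegral_mono fun τ => ?_
  by_cases hτ : τ ∈ Set.Ioc 0 T
  · rw [hf, Set.indicator_of_mem hτ, Set.indicator_of_mem (Set.Ioc_subset_Icc_self hτ)]
    gcongr
    rw [← ofReal_norm, ← ofReal_norm]
    have := exp_mul_bound (l := 0) hτ.1 (le_refl ‖g2 g τ y b‖)
    rw [norm_mul, norm_ee, one_mul] at this
    exact ENNReal.ofReal_le_ofReal this
  · rw [hf, Set.indicator_of_notMem hτ]; simp

/-- Plancherel in `x₂` for the source. -/
lemma g2_plancherel (τ y : ℝ) : ∫⁻ b, ‖g2 g τ y b‖ₑ ^ 2 = ∫⁻ z, ‖g τ y z‖ₑ ^ 2 := by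
  have hc : Continuous fun z => g τ y z :=
    h.gc.comp (g := fun p : ℝ × ℝ × ℝ => g p.1 p.2.1 p.2.2) (f := fun z => (τ, y, z)) (by fun_prop)
  have hi : Integrable (g τ y) := by
    refine Integrable.mono' ((integrable_wt.const_mul (wt y)).const_mul K)
      hc.aestronglyMeasurable (ae_of_all _ (h.gb τ y))
  refine plancherel _ hi (memLp_two_of_bound (C := K) hi fun z => ?_)
  refine (h.gb τ y z).trans (mul_le_of_le_one_right h.K0 ?_)
  exact mul_le_one₀ (wt_le_one _) (wt_nonneg _) (wt_le_one _)

/-- Plancherel in time and in `x₂` for the source at fixed `x₁`. -/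
lemma gam_sq (y : ℝ) :
    ∫⁻ p : ℝ × ℝ, ‖gam T g p.2 p.1 y‖ₑ ^ 2 ≤
      ∫⁻ z, ∫⁻ τ in Set.Icc 0 T, ‖g τ y z‖ₑ ^ 2 := by
  rw [Measure.volume_eq_prod, lintegral_prod]
  · calc ∫⁻ b, ∫⁻ l, ‖gam T g l b y‖ₑ ^ 2
        ≤ ∫⁻ b, ∫⁻ τ in Set.Icc 0 T, ‖g2 g τ y b‖ₑ ^ 2 := lintegral_mono fun b => h.gam_plancherel b y
      _ = ∫⁻ τ in Set.Icc 0 T, ∫⁻ b, ‖g2 g τ y b‖ₑ ^ 2 := by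
          refine lintegral_lintegral_swap ?_
          have : Continuous fun p : ℝ × ℝ => g2 g p.2 y p.1 :=
            h.g2_cont' (by fun_prop) (by fun_prop) (by fun_prop)
          unfold Function.uncurry
          exact (this.measurable.enorm.pow_const 2).aemeasurable
      _ = ∫⁻ τ in Set.Icc 0 T, ∫⁻ z, ‖g τ y z‖ₑ ^ 2 := by simp_rw [h.g2_plancherel]
      _ = _ := by
          refine lintegral_lintegral_swap ?_
          have : Continuous fun p : ℝ × ℝ => g p.1 y p.2 :=
            h.gc.comp (g := fun p : ℝ × ℝ × ℝ => g p.1 p.2.1 p.2.2)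
              (f := fun p : ℝ × ℝ => (p.1, y, p.2)) (by fun_prop)
          unfold Function.uncurry
          exact (this.measurable.enorm.pow_const 2).aemeasurable
  · have : Continuous fun p : ℝ × ℝ => gam T g p.2 p.1 y :=
      h.gam_cont.comp (g := fun p : ℝ × ℝ × ℝ => gam T g p.1 p.2.1 p.2.2)
        (f := fun p : ℝ × ℝ => (p.2, p.1, y)) (by fun_prop)
    exact (this.measurable.enorm.pow_const 2).aemeasurable

lemma laplace_AA_bound (l x b : ℝ) :
    ‖∫ t, ee (-(t * l)) * ((Real.exp (-t) : ℂ) * AA T G t x b)‖ₑ ≤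
      ENNReal.ofReal (72 * Real.pi ^ 3) * ∫⁻ y, ‖gam T g l b y‖ₑ := by
  rw [← ofReal_integral_norm_eq_lintegral_enorm (h.gam_int l b),
    ← ENNReal.ofReal_mul (by positivity), ← ofReal_norm]
  exact ENNReal.ofReal_le_ofReal (h.pointwise_bound l x b)

/-- The damping `e^{-t}` costs a factor `e` on `[0, T]`, as `T ≤ 1`. -/
lemma AA_damp (x b : ℝ) : ∫⁻ t in Set.Icc 0 T, ‖AA T G t x b‖ₑ ^ 2 ≤
    ENNReal.ofReal (Real.exp 1) ^ 2 * ∫⁻ t, ‖(Real.exp (-t) : ℂ) * AA T G t x b‖ₑ ^ 2 := by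
  rw [← lintegral_const_mul' _ _ (by simp)]
  refine (setLIntegral_mono_ae' measurableSet_Icc (ae_of_all _ fun t ht => ?_)).trans
    (setLIntegral_le_lintegral _ _)
  rw [← mul_pow]
  gcongr
  rw [← ofReal_norm, ← ofReal_norm, ← ENNReal.ofReal_mul (Real.exp_nonneg _)]
  refine ENNReal.ofReal_le_ofReal ?_
  rw [norm_mul, Complex.norm_real, Real.norm_eq_abs, Real.abs_exp, ← mul_assoc, ← Real.exp_add]
  refine le_mul_of_one_le_left (norm_nonneg _) (Real.one_le_exp ?_)
  linarith [ht.2, h.T1]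

/-- The double smoothing estimate for the second derivative of the Duhamel term, written as an
iterated inverse Fourier transform. -/
lemma smoothing (x : ℝ) :
    ∫⁻ z, ∫⁻ t in Set.Icc 0 T, ‖∫ b, ee (z * b) * AA T G t x b‖ₑ ^ 2 ≤
      (ENNReal.ofReal (Real.exp 1) * ENNReal.ofReal (72 * Real.pi ^ 3) *
        ∫⁻ y, (∫⁻ z, ∫⁻ τ in Set.Icc 0 T, ‖g τ y z‖ₑ ^ 2) ^ ((1:ℝ)/2)) ^ 2 := by
  have hm : StronglyMeasurable fun p : ℝ × ℝ => ∫ b, ee (p.1 * b) * AA T G p.2 x b := by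
    refine StronglyMeasurable.integral_prod_right'
      (f := fun q : (ℝ × ℝ) × ℝ => ee (q.1.1 * q.2) * AA T G q.1.2 x q.2) ?_
    exact (Continuous.stronglyMeasurable (by fun_prop)).mul
      ((h.AA_meas x).comp_measurable (g := fun q : (ℝ × ℝ) × ℝ => (q.1.2, q.2)) (by fun_prop))
  have hg : Measurable fun p : (ℝ × ℝ) × ℝ => ‖gam T g p.1.2 p.1.1 p.2‖ₑ := by
    have : Continuous fun p : (ℝ × ℝ) × ℝ => gam T g p.1.2 p.1.1 p.2 :=
      h.gam_cont.comp (g := fun p : ℝ × ℝ × ℝ => gam T g p.1 p.2.1 p.2.2)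
        (f := fun p : (ℝ × ℝ) × ℝ => (p.1.2, p.1.1, p.2)) (by fun_prop)
    exact this.measurable.enorm
  have hmink := minkowski_two (volume : Measure (ℝ × ℝ)) volume
    (fun p y => ‖gam T g p.2 p.1 y‖ₑ) hg
  have hy : ∫⁻ y, (∫⁻ p : ℝ × ℝ, ‖gam T g p.2 p.1 y‖ₑ ^ 2) ^ ((1:ℝ)/2) ≤
      ∫⁻ y, (∫⁻ z, ∫⁻ τ in Set.Icc 0 T, ‖g τ y z‖ₑ ^ 2) ^ ((1:ℝ)/2) :=
    lintegral_mono fun y => ENNReal.rpow_le_rpow (h.gam_sq y) (by norm_num)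
  have hC : ENNReal.ofReal (72 * Real.pi ^ 3) ^ 2 ≠ ⊤ := ENNReal.pow_ne_top ENNReal.ofReal_ne_top
  have hEC : (ENNReal.ofReal (Real.exp 1) * ENNReal.ofReal (72 * Real.pi ^ 3)) ^ 2 ≠ ⊤ :=
    ENNReal.pow_ne_top (ENNReal.mul_ne_top ENNReal.ofReal_ne_top ENNReal.ofReal_ne_top)
  set E := ENNReal.ofReal (Real.exp 1)
  set C := ENNReal.ofReal (72 * Real.pi ^ 3)
  calc ∫⁻ z, ∫⁻ t in Set.Icc 0 T, ‖∫ b, ee (z * b) * AA T G t x b‖ₑ ^ 2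
      = ∫⁻ t in Set.Icc 0 T, ∫⁻ z, ‖∫ b, ee (z * b) * AA T G t x b‖ₑ ^ 2 :=
        lintegral_lintegral_swap (hm.measurable.enorm.pow_const 2).aemeasurable
    _ = ∫⁻ t in Set.Icc 0 T, ∫⁻ b, ‖AA T G t x b‖ₑ ^ 2 := by simp_rw [h.plancherel_AA_b]
    _ = ∫⁻ b, ∫⁻ t in Set.Icc 0 T, ‖AA T G t x b‖ₑ ^ 2 :=
        lintegral_lintegral_swap ((h.AA_meas x).measurable.enorm.pow_const 2).aemeasurable
    _ ≤ ∫⁻ b, E ^ 2 * (C ^ 2 * ∫⁻ l, (∫⁻ y, ‖gam T g l b y‖ₑ) ^ 2) := by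
        refine lintegral_mono fun b => (h.AA_damp x b).trans (mul_le_mul_right ?_ _)
        rw [h.plancherel_AA_t, ← lintegral_const_mul' _ _ hC]
        refine lintegral_mono fun l => ?_
        rw [← mul_pow]
        gcongr
        exact h.laplace_AA_bound l x b
    _ = (E * C) ^ 2 * ∫⁻ p : ℝ × ℝ, (∫⁻ y, ‖gam T g p.2 p.1 y‖ₑ) ^ 2 := by
        simp_rw [← mul_assoc, ← mul_pow]
        rw [lintegral_const_mul' _ _ hEC, Measure.volume_eq_prod,
          lintegral_prod]
        exact (hg.lintegral_prod_right'.pow_const 2).aemeasurable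
    _ ≤ (E * C) ^ 2 * (∫⁻ y, (∫⁻ p : ℝ × ℝ, ‖gam T g p.2 p.1 y‖ₑ ^ 2) ^ ((1:ℝ)/2)) ^ 2 := by
        exact mul_le_mul_right hmink _
    _ ≤ (E * C) ^ 2 * (∫⁻ y, (∫⁻ z, ∫⁻ τ in Set.Icc 0 T, ‖g τ y z‖ₑ ^ 2) ^ ((1:ℝ)/2)) ^ 2 := by
        exact mul_le_mul_right (pow_le_pow_left' hy 2) _
    _ = _ := (mul_pow _ _ 2).symm

end Adm

/-! ### The Duhamel term as an inverse Fourier integral -/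

/-- The linear phase `x ↦ 2πi (x₁ a + x₂ b)`. -/
def phase (a b : ℝ) : ℝ × ℝ →L[ℝ] ℂ :=
  sy a • Complex.ofRealCLM.comp (ContinuousLinearMap.fst ℝ ℝ ℝ) +
    sy b • Complex.ofRealCLM.comp (ContinuousLinearMap.snd ℝ ℝ ℝ)

lemma phase_apply (a b : ℝ) (x : ℝ × ℝ) : phase a b x = sy a * x.1 + sy b * x.2 := by
  simp [phase]

lemma ee_phase (a b : ℝ) (x : ℝ × ℝ) :
    ee (x.1 * a + x.2 * b) = Complex.exp (phase a b x) := by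
  rw [phase_apply]; unfold ee sy
  congr 1; push_cast; ring

lemma norm_phase_le (a b : ℝ) : ‖phase a b‖ ≤ 16 * ((1 + a ^ 2) * (1 + b ^ 2)) := by
  refine ContinuousLinearMap.opNorm_le_bound _ (by positivity) fun x => ?_
  rw [phase_apply]
  have h1 : ‖((x.1 : ℝ) : ℂ)‖ ≤ ‖x‖ := by rw [Complex.norm_real]; exact norm_fst_le x
  have h2 : ‖((x.2 : ℝ) : ℂ)‖ ≤ ‖x‖ := by rw [Complex.norm_real]; exact norm_snd_le x
  calc _ ≤ ‖sy a‖ * ‖((x.1 : ℝ) : ℂ)‖ + ‖sy b‖ * ‖((x.2 : ℝ) : ℂ)‖ := by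
        rw [← norm_mul, ← norm_mul]; exact norm_add_le _ _
    _ ≤ (8 * (1 + a ^ 2)) * ‖x‖ + (8 * (1 + b ^ 2)) * ‖x‖ := by
        gcongr
        · exact norm_sy_le a
        · exact norm_sy_le b
    _ ≤ _ := by
        rw [← add_mul]
        refine mul_le_mul_of_nonneg_right ?_ (norm_nonneg _)
        nlinarith [mul_nonneg (sq_nonneg a) (sq_nonneg b), sq_nonneg a, sq_nonneg b]

lemma integrable_wt2 (M : ℝ) : Integrable fun ξ : ℝ × ℝ => M * (wt ξ.1 * wt ξ.2) :=
  (integrable_wt.mul_prod integrable_wt).const_mul M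

/-- Differentiation under the inverse Fourier integral. -/
lemma pd1_inv {H : ℝ × ℝ → ℂ} (hm : StronglyMeasurable H) {M : ℝ}
    (hM : ∀ ξ, ‖H ξ‖ ≤ M * (wt ξ.1 ^ 2 * wt ξ.2 ^ 2)) (x : ℝ × ℝ) :
    pd1 (fun x => ∫ ξ : ℝ × ℝ, ee (x.1 * ξ.1 + x.2 * ξ.2) * H ξ) x =
      ∫ ξ : ℝ × ℝ, ee (x.1 * ξ.1 + x.2 * ξ.2) * (sy ξ.1 * H ξ) := by
  have hM0 : 0 ≤ M := by
    have := (norm_nonneg _).trans (hM 0)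
    simpa [wt] using this
  have hwt : ∀ ξ : ℝ × ℝ, wt ξ.1 ^ 2 * wt ξ.2 ^ 2 ≤ wt ξ.1 * wt ξ.2 := fun ξ => by
    have h1 := wt_nonneg ξ.1
    have h2 := wt_nonneg ξ.2
    gcongr
    · exact pow_le_of_le_one h1 (wt_le_one _) (by norm_num)
    · exact pow_le_of_le_one h2 (wt_le_one _) (by norm_num)
  have hme : ∀ y : ℝ × ℝ, StronglyMeasurable fun ξ : ℝ × ℝ => ee (y.1 * ξ.1 + y.2 * ξ.2) * H ξ :=
    fun y => (Continuous.stronglyMeasurable (by fun_prop)).mul hm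
  have hmd : ∀ y : ℝ × ℝ, StronglyMeasurable fun ξ : ℝ × ℝ =>
      (ee (y.1 * ξ.1 + y.2 * ξ.2) * H ξ) • phase ξ.1 ξ.2 := fun y => by
    refine (hme y).smul (Continuous.stronglyMeasurable ?_)
    unfold phase
    fun_prop
  have hbd : ∀ (ξ y : ℝ × ℝ), ‖(ee (y.1 * ξ.1 + y.2 * ξ.2) * H ξ) • phase ξ.1 ξ.2‖ ≤
      16 * M * (wt ξ.1 * wt ξ.2) := by
    intro ξ y
    rw [norm_smul, norm_mul, norm_ee, one_mul]
    calc _ ≤ M * (wt ξ.1 ^ 2 * wt ξ.2 ^ 2) * (16 * ((1 + ξ.1 ^ 2) * (1 + ξ.2 ^ 2))) := by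
          gcongr
          · exact hM ξ
          · exact norm_phase_le _ _
      _ = _ := by unfold wt; field_simp
  have hd : HasFDerivAt (fun x => ∫ ξ : ℝ × ℝ, ee (x.1 * ξ.1 + x.2 * ξ.2) * H ξ)
      (∫ ξ : ℝ × ℝ, (ee (x.1 * ξ.1 + x.2 * ξ.2) * H ξ) • phase ξ.1 ξ.2) x := by
    have k1 : Integrable fun ξ : ℝ × ℝ => ee (x.1 * ξ.1 + x.2 * ξ.2) * H ξ := by
      refine (integrable_wt2 M).mono' (hme x).aestronglyMeasurable (ae_of_all _ fun ξ => ?_)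
      rw [norm_mul, norm_ee, one_mul]
      exact (hM ξ).trans (mul_le_mul_of_nonneg_left (hwt ξ) hM0)
    have k2 : ∀ᵐ ξ : ℝ × ℝ, ∀ y ∈ (Set.univ : Set (ℝ × ℝ)),
        ‖(ee (y.1 * ξ.1 + y.2 * ξ.2) * H ξ) • phase ξ.1 ξ.2‖ ≤ 16 * M * (wt ξ.1 * wt ξ.2) :=
      Eventually.of_forall fun ξ y _ => hbd ξ y
    have k3 : ∀ᵐ ξ : ℝ × ℝ, ∀ y ∈ (Set.univ : Set (ℝ × ℝ)),
        HasFDerivAt (fun y : ℝ × ℝ => ee (y.1 * ξ.1 + y.2 * ξ.2) * H ξ)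
          ((ee (y.1 * ξ.1 + y.2 * ξ.2) * H ξ) • phase ξ.1 ξ.2) y := by
      refine Eventually.of_forall fun ξ y _ => ?_
      have := ((phase ξ.1 ξ.2).hasFDerivAt (x := y)).cexp.mul_const (H ξ)
      simp_rw [ee_phase]
      convert! this using 1
      rw [smul_smul, mul_comm]
    exact hasFDerivAt_integral_of_dominated_of_fderiv_le (𝕜 := ℝ) univ_mem
      (Eventually.of_forall fun y => (hme y).aestronglyMeasurable) k1
      (hmd x).aestronglyMeasurable k2 (integrable_wt2 _) k3
  unfold pd1
  rw [hd.fderiv, ContinuousLinearMap.integral_apply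
    ((integrable_wt2 (16 * M)).mono' (hmd x).aestronglyMeasurable (ae_of_all _ fun ξ => hbd ξ x))]
  congr 1; ext ξ
  simp [phase_apply]
  ring

/-- Fubini for the Fourier transform on the plane. -/
lemma FT_iterated {f : ℝ × ℝ → ℂ} (hc : Continuous f) {K : ℝ}
    (hb : ∀ y z, ‖f (y, z)‖ ≤ K * (wt y * wt z)) (ξ : ℝ × ℝ) :
    FT f ξ = ∫ y, ee (-(y * ξ.1)) * ∫ z, ee (-(z * ξ.2)) * f (y, z) := by
  have hi : Integrable (fun x : ℝ × ℝ =>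
      Complex.exp (((-(2 * Real.pi * (x.1 * ξ.1 + x.2 * ξ.2)) : ℝ) : ℂ) * Complex.I) *
        f x) := by
    refine (integrable_wt2 K).mono' (Continuous.aestronglyMeasurable (by fun_prop))
      (ae_of_all _ fun x => ?_)
    rw [norm_mul, Complex.norm_exp_ofReal_mul_I, one_mul]
    exact hb _ _
  unfold FT
  rw [Measure.volume_eq_prod, integral_prod _ hi]
  congr 1; ext y
  rw [← integral_const_mul]
  congr 1; ext z
  rw [← mul_assoc, ← ee_add]
  unfold ee
  congr 3
  push_cast
  ring

namespace Adm
variable {T K : ℝ} {g G : ℝ → ℝ → ℝ → ℂ} (h : Adm T K g G)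
include h

lemma FT_eq (τ : ℝ) (ξ : ℝ × ℝ) : FT (fun p => g τ p.1 p.2) ξ = G τ ξ.1 ξ.2 := by
  have hc : Continuous fun p : ℝ × ℝ => g τ p.1 p.2 :=
    h.gc.comp (g := fun p : ℝ × ℝ × ℝ => g p.1 p.2.1 p.2.2)
      (f := fun p : ℝ × ℝ => (τ, p.1, p.2)) (by fun_prop)
  rw [h.Gdef]
  exact FT_iterated hc (h.gb τ) ξ

lemma HH_integrand_bound' (hG : ∀ τ a b, ‖G τ a b‖ ≤ K * (wt a ^ 3 * wt b ^ 2))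
    (t τ a b : ℝ) : ‖(if τ ≤ t then
    Complex.exp (Complex.I * (((t - τ) * a * (a ^ 2 + b ^ 2) : ℝ) : ℂ)) * G τ a b else 0)‖
      ≤ K * (wt a ^ 3 * wt b ^ 2) := by
  split_ifs
  · rw [norm_phase]; exact hG τ a b
  · rw [norm_zero]
    exact mul_nonneg h.K0 (mul_nonneg (pow_nonneg (wt_nonneg _) _) (pow_nonneg (wt_nonneg _) _))

lemma HH_bound' (hG : ∀ τ a b, ‖G τ a b‖ ≤ K * (wt a ^ 3 * wt b ^ 2)) (t a b : ℝ) :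
    ‖HH T G t a b‖ ≤ K * (wt a ^ 3 * wt b ^ 2) :=
  h.setInt_bound (mul_nonneg h.K0 (mul_nonneg (pow_nonneg (wt_nonneg _) _)
    (pow_nonneg (wt_nonneg _) _))) fun τ _ => h.HH_integrand_bound' hG t τ a b

/-- The Duhamel integral is the inverse Fourier transform of `HH`, by Fubini in time and frequency. The
given source `gs` has to agree with `g` only on `[0, T]`. -/
lemma Duh_eq {gs : ℝ → ℝ × ℝ → ℂ} (hgs : ∀ τ ∈ Set.Icc 0 T, gs τ = fun p => g τ p.1 p.2)
    {t : ℝ} (ht : t ∈ Set.Icc 0 T) :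
    Duh gs t = fun x => ∫ ξ : ℝ × ℝ, ee (x.1 * ξ.1 + x.2 * ξ.2) * HH T G t ξ.1 ξ.2 := by
  ext x
  have hU : ∀ τ ∈ Set.Icc 0 T, U (t - τ) (gs τ) x = ∫ ξ : ℝ × ℝ, ee (x.1 * ξ.1 + x.2 * ξ.2) *
      (Complex.exp (Complex.I * (((t - τ) * ξ.1 * (ξ.1 ^ 2 + ξ.2 ^ 2) : ℝ) : ℂ)) *
        G τ ξ.1 ξ.2) := by
    intro τ hτ
    unfold U FTinv
    rw [hgs τ hτ]
    simp_rw [h.FT_eq]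
    rfl
  unfold Duh
  rw [intervalIntegral.integral_of_le ht.1]
  have h1 : ∫ τ in Set.Ioc 0 t, U (t - τ) (gs τ) x = ∫ τ in Set.Ioc 0 T, ∫ ξ : ℝ × ℝ,
      ee (x.1 * ξ.1 + x.2 * ξ.2) * (if τ ≤ t then
      Complex.exp (Complex.I * (((t - τ) * ξ.1 * (ξ.1 ^ 2 + ξ.2 ^ 2) : ℝ) : ℂ)) *
        G τ ξ.1 ξ.2 else 0) := by
    rw [← integral_indicator measurableSet_Ioc, ← integral_indicator measurableSet_Ioc]
    congr 1; ext τ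
    by_cases hτ : τ ∈ Set.Ioc 0 t
    · have hτT : τ ∈ Set.Ioc 0 T := ⟨hτ.1, hτ.2.trans ht.2⟩
      rw [Set.indicator_of_mem hτ, Set.indicator_of_mem hτT, hU τ (Set.Ioc_subset_Icc_self hτT)]
      simp_rw [if_pos hτ.2]
    · rw [Set.indicator_of_notMem hτ]
      by_cases hτT : τ ∈ Set.Ioc 0 T
      · have : ¬ τ ≤ t := fun hle => hτ ⟨hτT.1, hle⟩
        rw [Set.indicator_of_mem hτT]
        simp [if_neg this]
      · rw [Set.indicator_of_notMem hτT]
  rw [h1]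
  unfold HH
  simp_rw [← integral_const_mul]
  refine integral_integral_swap ?_
  have hb : Integrable (fun p : ℝ × (ℝ × ℝ) => (1:ℝ) * (K * (wt p.2.1 * wt p.2.2)))
      ((volume.restrict (Set.Ioc 0 T)).prod volume) :=
    (integrable_const (1:ℝ)).mul_prod (integrable_wt2 K)
  refine hb.mono' ?_ (ae_of_all _ fun p => ?_)
  · refine Measurable.aestronglyMeasurable ?_
    refine Measurable.mul (by fun_prop) ?_
    exact h.meas_integrand.comp (f := fun p : ℝ × (ℝ × ℝ) => ((t, p.2.1, p.2.2), p.1)) (by fun_prop)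
  · simp only [Function.uncurry]
    rw [norm_mul, norm_ee, one_mul, one_mul]
    refine (h.HH_integrand_bound _ _ _ _).trans (mul_le_mul_of_nonneg_left ?_ h.K0)
    exact mul_le_mul_of_nonneg_right (pow_le_of_le_one (wt_nonneg _) (wt_le_one _) (by norm_num))
      (wt_nonneg _)

/-- The second `x₁` derivative of the Duhamel integral as an iterated Fourier integral. The extra decay
of `G` in `b` makes the inverse Fourier integral differentiable in both variables, as needed for
`pd1`, which is defined through the total derivative. -/
lemma pd1_pd1_Duh (hG : ∀ τ a b, ‖G τ a b‖ ≤ K * (wt a ^ 3 * wt b ^ 2))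
    {gs : ℝ → ℝ × ℝ → ℂ} (hgs : ∀ τ ∈ Set.Icc 0 T, gs τ = fun p => g τ p.1 p.2)
    {t : ℝ} (ht : t ∈ Set.Icc 0 T) (x z : ℝ) :
    pd1 (pd1 (Duh gs t)) (x, z) = ∫ b, ee (z * b) * AA T G t x b := by
  have hm : StronglyMeasurable fun ξ : ℝ × ℝ => HH T G t ξ.1 ξ.2 :=
    h.HH_meas' (by fun_prop) (by fun_prop) (by fun_prop)
  have hm1 : StronglyMeasurable fun ξ : ℝ × ℝ => sy ξ.1 * HH T G t ξ.1 ξ.2 :=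
    (Continuous.stronglyMeasurable (by fun_prop)).mul hm
  rw [h.Duh_eq hgs ht]
  have e1 : pd1 (fun x => ∫ ξ : ℝ × ℝ, ee (x.1 * ξ.1 + x.2 * ξ.2) * HH T G t ξ.1 ξ.2) =
      fun x => ∫ ξ : ℝ × ℝ, ee (x.1 * ξ.1 + x.2 * ξ.2) * (sy ξ.1 * HH T G t ξ.1 ξ.2) := by
    ext x
    refine pd1_inv hm (M := K) (fun ξ => ?_) x
    refine (h.HH_bound' hG t ξ.1 ξ.2).trans (mul_le_mul_of_nonneg_left ?_ h.K0)
    exact mul_le_mul_of_nonneg_right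
      (pow_le_pow_of_le_one (wt_nonneg _) (wt_le_one _) (by norm_num)) (pow_nonneg (wt_nonneg _) _)
  rw [e1, pd1_inv hm1 (M := 8 * K) (fun ξ => ?_)]
  · have hi : Integrable (fun ξ : ℝ × ℝ => ee (x * ξ.1 + z * ξ.2) *
        (sy ξ.1 * (sy ξ.1 * HH T G t ξ.1 ξ.2))) := by
      refine (integrable_wt2 (64 * K)).mono' (StronglyMeasurable.aestronglyMeasurable
        ((Continuous.stronglyMeasurable (by fun_prop)).mul
          ((Continuous.stronglyMeasurable (by fun_prop)).mul hm1))) (ae_of_all _ fun ξ => ?_)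
      rw [norm_mul, norm_ee, one_mul, ← mul_assoc, ← sq]
      exact (h.symHH_bound t ξ.1 ξ.2).trans (le_of_eq (by ring))
    rw [Measure.volume_eq_prod, integral_prod_symm _ hi]
    congr 1; ext b
    unfold AA
    rw [← integral_const_mul]
    congr 1; ext a
    simp only
    rw [ee_add]; ring
  · rw [norm_mul]
    calc _ ≤ (8 * (1 + ξ.1 ^ 2)) * (K * (wt ξ.1 ^ 3 * wt ξ.2 ^ 2)) := by
          gcongr
          · exact norm_sy_le _
          · exact h.HH_bound' hG t ξ.1 ξ.2
      _ = _ := by unfold wt; field_simp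

end Adm

/-! ### Reduction from Schwartz sources -/

section SchwartzSources

open scoped SchwartzMap FourierTransform

/-- A continuous family of Schwartz functions over a compact space decays uniformly. -/
lemma sch_decay {X E : Type*} [TopologicalSpace X] [CompactSpace X] [NormedAddCommGroup E]
    [NormedSpace ℝ E] {ψ : X → 𝓢(E, ℂ)} (hψ : Continuous ψ) (k : ℕ) :
    ∃ K : ℝ, 0 ≤ K ∧ ∀ s x, (1 + ‖x‖) ^ k * ‖ψ s x‖ ≤ K := by
  have hf : Continuous fun s =>
      (Finset.Iic (k, 0)).sup (fun m : ℕ × ℕ => SchwartzMap.seminorm ℝ m.1 m.2) (ψ s) := by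
    refine Continuous.comp (Seminorm.continuous_finsetSup fun m _ => ?_) hψ
    exact (schwartz_withSeminorms ℝ E ℂ).continuous_seminorm m
  obtain ⟨B, hB⟩ := (isCompact_range hf).bddAbove
  refine ⟨max (2 ^ k * B) 0, le_max_right _ _, fun s x => le_max_of_le_left ?_⟩
  have := SchwartzMap.one_add_le_sup_seminorm_apply (𝕜 := ℝ) (m := (k, 0)) (k := k) (n := 0)
    le_rfl le_rfl (ψ s) x
  rw [norm_iteratedFDeriv_zero] at this
  exact this.trans (mul_le_mul_of_nonneg_left (hB ⟨s, rfl⟩) (by positivity))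

lemma one_add_sq_le {a n : ℝ} (h : |a| ≤ n) : 1 + a ^ 2 ≤ (1 + n) ^ 2 := by
  have := sq_le_sq' (by linarith [neg_abs_le a]) ((le_abs_self a).trans h)
  nlinarith [abs_nonneg a]

lemma le_wt_of_decay {a b n u K : ℝ} (ha : |a| ≤ n) (hb : |b| ≤ n) (hu : 0 ≤ u) {p q : ℕ}
    (h : (1 + n) ^ (2 * p + 2 * q) * u ≤ K) : u ≤ K * (wt a ^ p * wt b ^ q) := by
  have h1 : (1 + a ^ 2) ^ p * (1 + b ^ 2) ^ q ≤ (1 + n) ^ (2 * p + 2 * q) := by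
    rw [pow_add, pow_mul, pow_mul]
    have := one_add_sq_le ha
    have := one_add_sq_le hb
    gcongr
  have h2 := (mul_le_mul_of_nonneg_right h1 hu).trans h
  unfold wt
  rw [inv_pow, inv_pow, ← mul_inv, ← div_eq_mul_inv, le_div_iff₀ (by positivity)]
  linarith

/-- The identification of `ℝ × ℝ` carrying the Euclidean norm with the plain product, whose norm is
the sup norm. -/
def prodEquiv : WithLp 2 (ℝ × ℝ) ≃L[ℝ] ℝ × ℝ := WithLp.prodContinuousLinearEquiv 2 ℝ ℝ ℝ

/-- The Fourier transform on `ℝ × ℝ` as a continuous operator on Schwartz functions. The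
target carries the Euclidean norm, since the Fourier transform is set up on inner product spaces. -/
def schFT : 𝓢(ℝ × ℝ, ℂ) →L[ℂ] 𝓢(WithLp 2 (ℝ × ℝ), ℂ) :=
  (FourierTransform.fourierCLM ℂ 𝓢(WithLp 2 (ℝ × ℝ), ℂ)).comp
    (SchwartzMap.compCLMOfContinuousLinearEquiv ℂ prodEquiv)

lemma schFT_apply (φ : 𝓢(ℝ × ℝ, ℂ)) (ξ : ℝ × ℝ) : schFT φ (WithLp.toLp 2 ξ) = FT φ ξ := by
  have h0 : schFT φ (WithLp.toLp 2 ξ) =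
      𝓕 (fun x : WithLp 2 (ℝ × ℝ) => φ (WithLp.ofLp x)) (WithLp.toLp 2 ξ) := rfl
  rw [h0, Real.fourier_eq']
  unfold FT
  rw [← (WithLp.volume_preserving_ofLp ℝ ℝ).integral_comp
    (MeasurableEquiv.toLp 2 (ℝ × ℝ)).symm.measurableEmbedding]
  congr 1; ext x
  rw [smul_eq_mul]
  congr 3
  rw [WithLp.prod_inner_apply]
  simp
  ring

/-- A continuous Schwartz-valued source on `[0, T]` extends to an admissible source for all times: the
time variable is clamped to `[0, T]`. -/
lemma exists_adm {T : ℝ} (hT0 : 0 ≤ T) (hT1 : T ≤ 1) {s : ℝ → 𝓢(ℝ × ℝ, ℂ)}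
    (hs : ContinuousOn s (Set.Icc 0 T)) :
    ∃ (K : ℝ) (g G : ℝ → ℝ → ℝ → ℂ), Adm T K g G ∧
      (∀ τ a b, ‖G τ a b‖ ≤ K * (wt a ^ 3 * wt b ^ 2)) ∧
      ∀ τ ∈ Set.Icc 0 T, ⇑(s τ) = fun p => g τ p.1 p.2 := by
  set S : Set.Icc 0 T → 𝓢(ℝ × ℝ, ℂ) := (Set.Icc 0 T).domRestrict s with hS
  have hSc : Continuous S := hs.domRestrict
  obtain ⟨K1, hK1, h1⟩ := sch_decay hSc 4
  obtain ⟨K2, hK2, h2⟩ := sch_decay (schFT.continuous.comp hSc) 10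
  set P : ℝ → Set.Icc 0 T := Set.projIcc 0 T hT0 with hP
  have hPc : Continuous P := continuous_projIcc
  have hw : ∀ y p, 0 ≤ wt y ^ p := fun y p => pow_nonneg (wt_nonneg _) _
  have hg1 : ∀ τ y z, ‖S (P τ) (y, z)‖ ≤ K1 * (wt y * wt z) := fun τ y z => by
    have := le_wt_of_decay (p := 1) (q := 1) (norm_fst_le (y, z)) (norm_snd_le (y, z))
      (norm_nonneg _) (h1 (P τ) (y, z))
    simpa using this
  have hG1 : ∀ τ a b, ‖FT (S (P τ)) (a, b)‖ ≤ K2 * (wt a ^ 3 * wt b ^ 2) := fun τ a b => by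
    have hn := WithLp.prod_norm_sq_eq_of_L2 (WithLp.toLp 2 (a, b))
    refine le_wt_of_decay (p := 3) (q := 2) (n := ‖WithLp.toLp 2 (a, b)‖) ?_ ?_
      (norm_nonneg _) ?_
    · refine abs_le_of_sq_le_sq ?_ (norm_nonneg _)
      rw [hn]; simp; positivity
    · refine abs_le_of_sq_le_sq ?_ (norm_nonneg _)
      rw [hn]; simp; positivity
    · rw [← schFT_apply]
      exact h2 (P τ) _
  have hgc : Continuous fun p : ℝ × ℝ × ℝ => S (P p.1) (p.2.1, p.2.2) := by
    have : Continuous fun p : ℝ × ℝ × ℝ =>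
        (SchwartzMap.toBoundedContinuousFunctionCLM ℂ (ℝ × ℝ) ℂ (S (P p.1))) (p.2.1, p.2.2) := by
      refine Continuous.eval ?_ (by fun_prop)
      exact (SchwartzMap.toBoundedContinuousFunctionCLM ℂ (ℝ × ℝ) ℂ).continuous.comp
        (hSc.comp (hPc.comp continuous_fst))
    exact this
  have hG2 : ∀ τ a b, ‖FT (S (P τ)) (a, b)‖ ≤ (K1 + K2) * (wt a ^ 3 * wt b ^ 2) := fun τ a b =>
    (hG1 τ a b).trans (mul_le_mul_of_nonneg_right (by linarith) (mul_nonneg (hw _ _) (hw _ _)))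
  refine ⟨K1 + K2, fun τ y z => S (P τ) (y, z), fun τ a b => FT (S (P τ)) (a, b),
    ⟨hT0, hT1, by linarith, hgc, fun τ y z => ?_, fun τ a b => ?_, fun τ a b => ?_⟩, hG2,
    fun τ hτ => ?_⟩
  · exact (hg1 τ y z).trans (mul_le_mul_of_nonneg_right (by linarith)
      (mul_nonneg (wt_nonneg _) (wt_nonneg _)))
  · exact FT_iterated (hgc.comp (f := fun p : ℝ × ℝ => (τ, p.1, p.2)) (by fun_prop))
      (fun y z => hg1 τ y z) (a, b)
  · refine (hG2 τ a b).trans (mul_le_mul_of_nonneg_left ?_ (by linarith))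
    exact mul_le_mul_of_nonneg_left (pow_le_of_le_one (wt_nonneg _) (wt_le_one _) (by norm_num))
      (hw _ _)
  · have : P τ = ⟨τ, hτ⟩ := Set.projIcc_of_mem hT0 hτ
    ext p
    simp only [this]
    rfl

end SchwartzSources

/-- double smoothing estimate for `∂²_{x₁}` of the Duhamel term. -/
theorem stmt8 :
    ∃ C : ℝ, 0 < C ∧ ∀ T : ℝ, 0 ≤ T → T ≤ 1 →
      ∀ g : ℝ → SchwartzMap (ℝ × ℝ) ℂ, ContinuousOn g (Set.Icc 0 T) →
        LinfX1L2Norm T (fun t => pd1 (pd1 (Duh (fun τ => ⇑(g τ)) t)))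
          ≤ ENNReal.ofReal C * L1x1L2Norm T (fun τ => ⇑(g τ)) := by
  refine ⟨Real.exp 1 * (72 * Real.pi ^ 3), by positivity, fun T hT0 hT1 s hs => ?_⟩
  obtain ⟨K, g, G, h, hG, hgs⟩ := exists_adm hT0 hT1 hs
  have e1 : L1x1L2Norm T (fun τ => ⇑(s τ)) =
      ∫⁻ y, (∫⁻ z, ∫⁻ τ in Set.Icc 0 T, ‖g τ y z‖ₑ ^ 2) ^ ((1:ℝ)/2) := by
    unfold L1x1L2Norm
    refine lintegral_congr fun y => ?_
    congr 1
    refine lintegral_congr fun z => setLIntegral_congr_fun measurableSet_Icc fun τ hτ => ?_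
    beta_reduce
    rw [hgs τ hτ, ENNReal.rpow_two]
    rfl
  rw [e1]
  refine iSup_le fun x => ?_
  have e2 : ∫⁻ z : ℝ, ∫⁻ t in Set.Icc (0:ℝ) T,
      (‖pd1 (pd1 (Duh (fun τ => ⇑(s τ)) t)) (x, z)‖₊ : ℝ≥0∞) ^ (2 : ℝ) =
      ∫⁻ z, ∫⁻ t in Set.Icc 0 T, ‖∫ b, ee (z * b) * AA T G t x b‖ₑ ^ 2 := by
    refine lintegral_congr fun z => setLIntegral_congr_fun measurableSet_Icc fun t ht => ?_
    rw [h.pd1_pd1_Duh hG hgs ht, ENNReal.rpow_two]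
    rfl
  rw [e2, ENNReal.ofReal_mul (Real.exp_nonneg _)]
  refine (ENNReal.rpow_le_rpow (h.smoothing x) (by norm_num)).trans (le_of_eq ?_)
  rw [← ENNReal.rpow_two, ← ENNReal.rpow_mul]
  norm_num
end
end

section
/- Let θ ∈ (8/5, 9/5) and c₂, c₃ ∈ ℝ. Then there exist λ₀ ∈ (0,1), C > 0, C' > 0 and N₀ ∈ ℕ such that: (i) 1/θ − c₂τ^θ − c₃τ^{2θ} > 0 for all τ ∈ (0,λ₀], so that G(λ) = ∫_λ^{λ₀} dτ / (τ^{1+θ}(1/θ − c₂τ^θ − c₃τ^{2θ})) is well-defined for all λ ∈ (0,λ₀]; (ii) G is strictly decreasing and maps (0,λ₀] bijectively onto [0,∞); (iii) |G(λ) − λ^{-θ} + c₂θ² log λ| ≤ C for all λ ∈ (0,λ₀]; and (iv) for every integer n ≥ N₀, the inverse satisfies |G^{-1}(n) − n^{-1/θ}| ≤ C' n^{-1-1/θ} log n. -/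
/-! The proof rests on the expansion of the integrand at `τ = 0`. Write `t = τ ^ θ` and
`D = 1/θ - c₂ t - c₃ t²`. Then `D (θ + θ² c₂ t) = 1 - t² (θ² c₂² + θ c₃ + θ² c₂ c₃ t)`, so
`1 / (τ t D) = θ τ ^ (-θ-1) + θ² c₂ τ⁻¹ + h(τ)`, where `h` is `τ ^ (θ-1)` times a bounded factor and
hence bounded on `(0, λ₀]`, as `θ > 1` (`abs_remainder_le`). Integrating term by term gives
`G(λ) = λ ^ (-θ) - c₂ θ² log λ + O(1)` (`abs_integral_asymptotics_le`).

The integrand is positive and continuous, so `G` is continuous and strictly decreasing with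
`G(λ₀) = 0`; it is onto `[0, ∞)` since the integrand is at least a multiple of `τ⁻¹`
(`exists_le_integral`).

For the inverse, `G(λ) = n` means that `y = λ ^ (-θ)` satisfies `|n - y| ≤ C + k log y`. For large
`n` this makes `y` comparable to `n`, whence `|n - y| = O(log n)` (`exists_near_of_log_error`), and
the mean value theorem for `x ↦ x ^ (-1/θ)` on `[n/2, ∞)` turns this into the estimate for
`λ = y ^ (-1/θ)` (`abs_rpow_sub_rpow_le`). -/

open MeasureTheory

noncomputable section

/-! ### Expansion of the integrand at zero -/

/-- The factor `1/θ - c₂ τ ^ θ - c₃ τ ^ (2θ)` in the denominator of the integrand. -/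
def den (θ c₂ c₃ τ : ℝ) : ℝ := 1/θ - c₂ * τ ^ θ - c₃ * τ ^ (2*θ)

/-- The integrand defining `G`. -/
def integrand (θ c₂ c₃ τ : ℝ) : ℝ := (τ ^ (1+θ) * den θ c₂ c₃ τ)⁻¹

lemma rpow_two_mul_eq_sq {θ τ : ℝ} (hτ : 0 < τ) : τ ^ (2*θ) = (τ ^ θ)^2 := by
  rw [two_mul, Real.rpow_add hτ, sq]

lemma rpow_le_self_of_le_one {θ τ : ℝ} (hθ : 1 < θ) (hτ : 0 < τ) (h1 : τ ≤ 1) : τ ^ θ ≤ τ := by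
  simpa using Real.rpow_le_rpow_of_exponent_ge hτ h1 hθ.le

lemma half_inv_le_den {θ c₂ c₃ τ : ℝ} (hθ : 1 < θ) (hθ' : θ < 2) (hτ : 0 < τ)
    (hl : τ ≤ 1 / (4 * (|c₂| + |c₃| + 1))) : 1 / (2*θ) ≤ den θ c₂ c₃ τ := by
  have hA := abs_nonneg c₂
  have hB := abs_nonneg c₃
  have hS : τ * (4 * (|c₂| + |c₃| + 1)) ≤ 1 := by
    rwa [le_div_iff₀ (by positivity)] at hl
  have h1 : τ ≤ 1 := by nlinarith
  have ht : 0 < τ ^ θ := Real.rpow_pos_of_pos hτ _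
  have htτ := rpow_le_self_of_le_one hθ hτ h1
  have htt : (τ ^ θ)^2 ≤ τ := by nlinarith
  have e2 : c₂ * τ ^ θ ≤ |c₂| * τ :=
    (mul_le_mul_of_nonneg_right (le_abs_self _) ht.le).trans (by gcongr)
  have e3 : c₃ * (τ ^ θ)^2 ≤ |c₃| * τ :=
    (mul_le_mul_of_nonneg_right (le_abs_self _) (sq_nonneg _)).trans (by gcongr)
  have hq : 1/4 ≤ 1/(2*θ) := by
    apply one_div_le_one_div_of_le <;> linarith
  have hh : 1/θ = 1/(2*θ) + 1/(2*θ) := by field_simp; norm_num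
  rw [den, rpow_two_mul_eq_sq hτ]
  nlinarith

lemma den_le {θ c₂ c₃ τ : ℝ} (hθ : 1 < θ) (hτ : 0 < τ) (h1 : τ ≤ 1) :
    den θ c₂ c₃ τ ≤ 1 + |c₂| + |c₃| := by
  have ht : 0 < τ ^ θ := Real.rpow_pos_of_pos hτ _
  have ht1 := (rpow_le_self_of_le_one hθ hτ h1).trans h1
  have htt : (τ ^ θ)^2 ≤ 1 := by nlinarith
  have hi : 1/θ ≤ 1 := by rw [div_le_one (by linarith)]; exact hθ.le
  have e2 : -c₂ * τ ^ θ ≤ |c₂| * 1 :=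
    (mul_le_mul_of_nonneg_right (neg_le_abs _) ht.le).trans (by gcongr)
  have e3 : -c₃ * (τ ^ θ)^2 ≤ |c₃| * 1 :=
    (mul_le_mul_of_nonneg_right (neg_le_abs _) (sq_nonneg _)).trans (by gcongr)
  rw [den, rpow_two_mul_eq_sq hτ]
  linarith

/-- The integrand agrees with the first two terms of its expansion at `0` up to a bounded error;
the error is of order `τ ^ (θ - 1)`, hence the role of `θ > 1`. -/
lemma abs_remainder_le {θ c₂ c₃ τ : ℝ} (hθ : 1 < θ) (hτ : 0 < τ) (h1 : τ ≤ 1)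
    (hD : 1 / (2*θ) ≤ den θ c₂ c₃ τ) :
    |integrand θ c₂ c₃ τ - (θ * τ ^ (-θ-1) + θ^2 * c₂ * τ⁻¹)|
      ≤ (θ^2 * c₂^2 + θ * |c₃| + θ^2 * |c₂ * c₃|) * (2*θ) := by
  have hθ0 : 0 < θ := by linarith
  have ht : 0 < τ ^ θ := Real.rpow_pos_of_pos hτ _
  have htτ := rpow_le_self_of_le_one hθ hτ h1
  have hDpos : 0 < den θ c₂ c₃ τ := lt_of_lt_of_le (by positivity) hD
  have hDi : (den θ c₂ c₃ τ)⁻¹ ≤ 2*θ := by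
    have := one_div_le_one_div_of_le (by positivity) hD
    simpa using this
  have hDdef : den θ c₂ c₃ τ = 1/θ - c₂ * τ ^ θ - c₃ * (τ ^ θ)^2 := by
    rw [den, rpow_two_mul_eq_sq hτ]
  have e1 : τ ^ (1+θ) = τ * τ ^ θ := by rw [Real.rpow_add hτ, Real.rpow_one]
  have e2 : τ ^ (-θ-1) = (τ ^ θ)⁻¹ * τ⁻¹ := by
    rw [sub_eq_add_neg, Real.rpow_add hτ, Real.rpow_neg hτ.le, Real.rpow_neg_one]
  rw [integrand, e1, e2]
  generalize τ ^ θ = t at *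
  generalize den θ c₂ c₃ τ = D at *
  have key : (τ * t * D)⁻¹ - (θ * (t⁻¹ * τ⁻¹) + θ^2 * c₂ * τ⁻¹)
      = (t / τ) * (θ^2 * c₂^2 + θ * c₃ + θ^2 * (c₂ * c₃) * t) * D⁻¹ := by
    have hid : 1 - D * (θ + θ^2 * c₂ * t)
        = t^2 * (θ^2 * c₂^2 + θ * c₃ + θ^2 * (c₂ * c₃) * t) := by
      rw [hDdef]; field_simp; ring
    have : (τ * t * D)⁻¹ - (θ * (t⁻¹ * τ⁻¹) + θ^2 * c₂ * τ⁻¹)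
        = (1 - D * (θ + θ^2 * c₂ * t)) / (τ * t * D) := by
      field_simp
    rw [this, hid]; field_simp
  have b1 : |t / τ| ≤ 1 := by
    rw [abs_of_pos (by positivity), div_le_one hτ]; exact htτ
  have b2 : |θ^2 * c₂^2 + θ * c₃ + θ^2 * (c₂ * c₃) * t|
      ≤ θ^2 * c₂^2 + θ * |c₃| + θ^2 * |c₂ * c₃| := by
    refine (abs_add_three _ _ _).trans ?_
    rw [abs_of_nonneg (by positivity : 0 ≤ θ^2 * c₂^2), abs_mul θ, abs_of_pos hθ0,
      abs_mul (θ^2 * _), abs_mul (θ^2), abs_of_pos (by positivity : 0 < θ^2), abs_of_pos ht]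
    have : θ^2 * |c₂ * c₃| * t ≤ θ^2 * |c₂ * c₃| * 1 := by gcongr; linarith
    linarith
  rw [key, abs_mul, abs_mul, abs_of_pos (inv_pos.2 hDpos)]
  calc _ ≤ 1 * (θ^2 * c₂^2 + θ * |c₃| + θ^2 * |c₂ * c₃|) * (2*θ) := by gcongr
    _ = _ := by ring

/-! ### Monotonicity, bijectivity and asymptotics of the integral -/

section Integral

variable {θ c₂ c₃ l : ℝ}

lemma integrand_pos {τ : ℝ} (hθ : 1 < θ) (hτ : 0 < τ) (hD : 1 / (2*θ) ≤ den θ c₂ c₃ τ) :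
    0 < integrand θ c₂ c₃ τ := by
  have : 0 < den θ c₂ c₃ τ := lt_of_lt_of_le (by positivity) hD
  unfold integrand; positivity

lemma continuousOn_integrand (hθ : 1 < θ)
    (hD : ∀ τ ∈ Set.Ioc 0 l, 1 / (2*θ) ≤ den θ c₂ c₃ τ) :
    ContinuousOn (integrand θ c₂ c₃) (Set.Ioc 0 l) := by
  have hp : ∀ p : ℝ, ContinuousOn (fun τ : ℝ => τ ^ p) (Set.Ioc 0 l) := fun p =>
    continuousOn_id.rpow_const fun x hx => Or.inl hx.1.ne'
  refine ContinuousOn.inv₀ ((hp _).mul ?_) ?_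
  · exact (continuousOn_const.sub (continuousOn_const.mul (hp _))).sub
      (continuousOn_const.mul (hp _))
  · intro τ hτ h
    have := integrand_pos hθ hτ.1 (hD τ hτ)
    rw [integrand, h] at this
    simp at this

lemma intervalIntegrable_integrand (hθ : 1 < θ)
    (hD : ∀ τ ∈ Set.Ioc 0 l, 1 / (2*θ) ≤ den θ c₂ c₃ τ) {a b : ℝ}
    (ha : a ∈ Set.Ioc 0 l) (hb : b ∈ Set.Ioc 0 l) :
    IntervalIntegrable (integrand θ c₂ c₃) volume a b :=
  ((continuousOn_integrand hθ hD).mono (Set.ordConnected_Ioc.uIcc_subset ha hb)).intervalIntegrable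

lemma strictAntiOn_integral (hθ : 1 < θ)
    (hD : ∀ τ ∈ Set.Ioc 0 l, 1 / (2*θ) ≤ den θ c₂ c₃ τ) :
    StrictAntiOn (fun a => ∫ τ in a..l, integrand θ c₂ c₃ τ) (Set.Ioc 0 l) := by
  intro a ha b hb hab
  have hl : l ∈ Set.Ioc 0 l := ⟨ha.1.trans_le ha.2, le_rfl⟩
  have hi := intervalIntegrable_integrand hθ hD ha hb
  have hadd := intervalIntegral.integral_add_adjacent_intervals hi
    (intervalIntegrable_integrand hθ hD hb hl)
  have hpos := intervalIntegral.intervalIntegral_pos_of_pos_on hi (fun x hx => by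
    have hx0 : 0 < x := ha.1.trans hx.1
    exact integrand_pos hθ hx0 (hD x ⟨hx0, hx.2.le.trans hb.2⟩)) hab
  simp only
  linarith

/-- `G` is unbounded: the integrand is at least `(K τ)⁻¹` with `K = 1 + |c₂| + |c₃|`, so
`G(l exp(-K y)) ≥ y`. -/
lemma exists_le_integral (hθ : 1 < θ) (hl0 : 0 < l) (hl1 : l ≤ 1)
    (hD : ∀ τ ∈ Set.Ioc 0 l, 1 / (2*θ) ≤ den θ c₂ c₃ τ) {y : ℝ} (hy : 0 ≤ y) :
    ∃ a ∈ Set.Ioc 0 l, y ≤ ∫ τ in a..l, integrand θ c₂ c₃ τ := by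
  have hK : 0 < 1 + |c₂| + |c₃| := by positivity
  set K := 1 + |c₂| + |c₃| with hKdef
  have hE : Real.exp (-(K * y)) ≤ 1 := Real.exp_le_one_iff.2 (by nlinarith)
  have ha : l * Real.exp (-(K * y)) ∈ Set.Ioc 0 l :=
    ⟨by positivity, by nlinarith⟩
  refine ⟨_, ha, ?_⟩
  set a := l * Real.exp (-(K * y)) with hadef
  have hl : l ∈ Set.Ioc 0 l := ⟨hl0, le_rfl⟩
  have h1 : ∫ τ in a..l, K⁻¹ * τ⁻¹ = y := by
    rw [intervalIntegral.integral_const_mul, integral_inv_of_pos ha.1 hl0,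
      Real.log_div hl0.ne' ha.1.ne', hadef, Real.log_mul hl0.ne' (Real.exp_pos _).ne',
      Real.log_exp]
    field_simp; ring
  rw [← h1]
  refine intervalIntegral.integral_mono_on ha.2 ?_ (intervalIntegrable_integrand hθ hD ha hl) ?_
  · refine ContinuousOn.intervalIntegrable (continuousOn_const.mul (continuousOn_inv₀.mono ?_))
    intro x hx
    exact (Set.ordConnected_Ioc.uIcc_subset ha hl hx).1.ne'
  · intro τ hτ
    have hτ' : τ ∈ Set.Ioc 0 l := ⟨ha.1.trans_le hτ.1, hτ.2⟩
    have hτ1 := hτ.2.trans hl1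
    have hd : 0 < den θ c₂ c₃ τ := lt_of_lt_of_le (by positivity) (hD τ hτ')
    rw [integrand, ← mul_inv, mul_comm K τ]
    have hτ0 := hτ'.1
    have hp := rpow_le_self_of_le_one (θ := 1 + θ) (by linarith) hτ0 hτ1
    have hdK : den θ c₂ c₃ τ ≤ K := den_le hθ hτ0 hτ1
    gcongr

lemma bijOn_integral (hθ : 1 < θ) (hl0 : 0 < l) (hl1 : l ≤ 1)
    (hD : ∀ τ ∈ Set.Ioc 0 l, 1 / (2*θ) ≤ den θ c₂ c₃ τ) :
    Set.BijOn (fun a => ∫ τ in a..l, integrand θ c₂ c₃ τ) (Set.Ioc 0 l) (Set.Ici 0) := by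
  have hanti := strictAntiOn_integral hθ hD
  have hl : l ∈ Set.Ioc 0 l := ⟨hl0, le_rfl⟩
  refine ⟨fun a ha => ?_, hanti.injOn, fun y hy => ?_⟩
  · have := hanti.antitoneOn ha hl ha.2
    simpa using this
  · obtain ⟨a, ha, hya⟩ := exists_le_integral hθ hl0 hl1 hD hy
    have hc : ContinuousOn (fun x => ∫ τ in x..l, integrand θ c₂ c₃ τ) (Set.Icc a l) := by
      have h := intervalIntegral.continuousOn_primitive_interval_left
        (((continuousOn_integrand hθ hD).mono
          (Set.ordConnected_Ioc.uIcc_subset ha hl)).integrableOn_compact isCompact_uIcc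
          (μ := volume))
      rwa [Set.uIcc_of_le ha.2] at h
    obtain ⟨x, hx, hxy⟩ := intermediate_value_Icc' ha.2 hc ⟨by simpa using hy, hya⟩
    exact ⟨x, ⟨ha.1.trans_le hx.1, hx.2⟩, hxy⟩

lemma abs_integral_asymptotics_le (hθ : 1 < θ) (hl1 : l ≤ 1)
    (hD : ∀ τ ∈ Set.Ioc 0 l, 1 / (2*θ) ≤ den θ c₂ c₃ τ) {a : ℝ} (ha : a ∈ Set.Ioc 0 l) :
    |(∫ τ in a..l, integrand θ c₂ c₃ τ) - a ^ (-θ) + c₂ * θ^2 * Real.log a|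
      ≤ (θ^2 * c₂^2 + θ * |c₃| + θ^2 * |c₂ * c₃|) * (2*θ)
        + |l ^ (-θ)| + |c₂ * θ^2 * Real.log l| := by
  have hl0 : 0 < l := ha.1.trans_le ha.2
  have hl : l ∈ Set.Ioc 0 l := ⟨hl0, le_rfl⟩
  have hsub := Set.ordConnected_Ioc.uIcc_subset ha hl
  have h0 : (0:ℝ) ∉ Set.uIcc a l := fun h => (hsub h).1.ne' rfl
  have i1 : IntervalIntegrable (fun τ : ℝ => θ * τ ^ (-θ-1)) volume a l :=
    (intervalIntegral.intervalIntegrable_rpow (Or.inr h0)).const_mul _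
  have i2 : IntervalIntegrable (fun τ : ℝ => θ^2 * c₂ * τ⁻¹) volume a l := by
    refine ContinuousOn.intervalIntegrable (continuousOn_const.mul (continuousOn_inv₀.mono ?_))
    intro x hx
    exact (hsub hx).1.ne'
  have hmain : ∫ τ in a..l, (θ * τ ^ (-θ-1) + θ^2 * c₂ * τ⁻¹)
      = a ^ (-θ) - l ^ (-θ) + c₂ * θ^2 * (Real.log l - Real.log a) := by
    rw [intervalIntegral.integral_add i1 i2, intervalIntegral.integral_const_mul,
      intervalIntegral.integral_const_mul, integral_rpow (Or.inr ⟨by linarith, h0⟩),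
      integral_inv_of_pos ha.1 hl0, Real.log_div hl0.ne' ha.1.ne']
    have : -θ - 1 + 1 = -θ := by ring
    rw [this]
    field_simp; ring
  have hrem := intervalIntegral.norm_integral_le_of_norm_le_const (a := a) (b := l)
    (f := fun τ => integrand θ c₂ c₃ τ - (θ * τ ^ (-θ-1) + θ^2 * c₂ * τ⁻¹))
    (C := (θ^2 * c₂^2 + θ * |c₃| + θ^2 * |c₂ * c₃|) * (2*θ)) (fun x hx => by
      have hx' := hsub (Set.uIoc_subset_uIcc hx)
      exact abs_remainder_le hθ hx'.1 (hx'.2.trans hl1) (hD x hx'))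
  rw [intervalIntegral.integral_sub (intervalIntegrable_integrand hθ hD ha hl) (i1.add i2),
    hmain, Real.norm_eq_abs] at hrem
  have hlen : |l - a| ≤ 1 := by
    rw [abs_of_nonneg (by linarith [ha.2])]; linarith [ha.1]
  have hrem' := hrem.trans (mul_le_of_le_one_right (by positivity) hlen)
  rw [abs_le] at hrem' ⊢
  have n1 := le_abs_self (l ^ (-θ))
  have n2 := neg_abs_le (l ^ (-θ))
  have n3 := le_abs_self (c₂ * θ^2 * Real.log l)
  have n4 := neg_abs_le (c₂ * θ^2 * Real.log l)
  constructor <;> linarith [hrem'.1, hrem'.2]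

end Integral

/-! ### Inverting the asymptotics -/

/-- If `y` differs from a large `n` by at most `C + k log y`, then `y` is comparable to `n` and the
error is in fact `O(log n)`. -/
lemma exists_near_of_log_error {C k : ℝ} (hC : 0 < C) (hk : 0 ≤ k) :
    ∃ N₀ : ℕ, ∀ n : ℕ, N₀ ≤ n → 3 ≤ n ∧ ∀ y : ℝ, 1 ≤ y → |(n:ℝ) - y| ≤ C + k * Real.log y →
      (n:ℝ) / 2 ≤ y ∧ |(n:ℝ) - y| ≤ (C + 2 * k) * Real.log n := by
  have hlim : ∀ᶠ y : ℝ in Filter.atTop, C + k * Real.log y ≤ y / 2 := by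
    have h1 := Real.isLittleO_log_id_atTop.bound (c := 1 / (4 * (k + 1))) (by positivity)
    filter_upwards [h1, Filter.eventually_ge_atTop (4 * C), Filter.eventually_ge_atTop 1]
      with y hy hyC hy1
    have hlog : Real.log y ≤ 1 / (4 * (k + 1)) * y := by
      have := (le_abs_self _).trans hy
      simpa [abs_of_nonneg (zero_le_one.trans hy1)] using this
    have : k * Real.log y ≤ y / 4 := calc
      k * Real.log y ≤ k * (1 / (4 * (k + 1)) * y) := by gcongr
      _ = y / 4 * (k / (k + 1)) := by field_simp
      _ ≤ y / 4 * 1 := by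
        gcongr
        rw [div_le_one (by positivity)]; linarith
      _ = y / 4 := by ring
    linarith
  obtain ⟨Y, hY⟩ := Filter.eventually_atTop.1 hlim
  -- below the threshold `Y` the hypothesis bounds `n` by `Y + C + k Y`, so large `n` forces `Y ≤ y`
  obtain ⟨N, hN⟩ := exists_nat_gt (Y + C + k * Y)
  refine ⟨max N 3, fun n hn => ⟨(le_max_right _ _).trans hn, fun y hy h => ?_⟩⟩
  have hn3 : (3:ℝ) ≤ n := by exact_mod_cast (le_max_right _ _).trans hn
  have hnN : (N:ℝ) ≤ n := by exact_mod_cast (le_max_left _ _).trans hn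
  have hlogy : Real.log y ≤ y := (Real.log_le_sub_one_of_pos (by linarith)).trans (by linarith)
  have habs := abs_le.1 h
  have hyY : Y ≤ y := by
    by_contra! hlt
    have : k * Real.log y ≤ k * Y := by gcongr; linarith
    linarith [habs.2]
  have hhalf := hY y hyY
  have hy2 : y ≤ 2 * n := by linarith [habs.1]
  refine ⟨by linarith [habs.2], h.trans ?_⟩
  have hlog1 : 1 ≤ Real.log n := by
    rw [Real.le_log_iff_exp_le (by linarith)]
    linarith [Real.exp_one_lt_d9]
  have hlog2 : Real.log y ≤ 2 * Real.log n := by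
    have h1 : Real.log y ≤ Real.log (2 * n) := Real.log_le_log (by linarith) hy2
    rw [Real.log_mul (by norm_num) (by linarith)] at h1
    have h2 : Real.log 2 ≤ Real.log n := Real.log_le_log (by norm_num) (by linarith)
    linarith
  nlinarith

/-- Mean value estimate for `x ↦ x ^ (-p)` on `[n/2, ∞)`. -/
lemma abs_rpow_sub_rpow_le {p n y : ℝ} (hp : 0 < p) (hn : 0 < n) (hy : n / 2 ≤ y) :
    |y ^ (-p) - n ^ (-p)| ≤ p * (n / 2) ^ (-1 - p) * |n - y| := by
  have h := Convex.norm_image_sub_le_of_norm_hasDerivWithin_le (𝕜 := ℝ) (s := Set.Ici (n / 2))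
    (f := fun x : ℝ => x ^ (-p)) (f' := fun x => -p * x ^ (-p - 1))
    (C := p * (n / 2) ^ (-1 - p)) (x := n) (y := y)
    (fun x hx => (Real.hasDerivAt_rpow_const
      (Or.inl ((half_pos hn).trans_le hx).ne')).hasDerivWithinAt)
    (fun x hx => by
      have hx0 : 0 < x := (half_pos hn).trans_le hx
      rw [norm_mul, norm_neg, Real.norm_of_nonneg hp.le,
        Real.norm_of_nonneg (by positivity), neg_sub_left, neg_add']
      exact mul_le_mul_of_nonneg_left
        (Real.rpow_le_rpow_of_nonpos (half_pos hn) hx (by linarith)) hp.le)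
    (convex_Ici _) (by simp [hn.le]) hy
  rwa [Real.norm_eq_abs, Real.norm_eq_abs, abs_sub_comm y n] at h

/-- properties of the function
`G(λ) = ∫_λ^{λ₀} dτ / (τ^{1+θ}(1/θ − c₂τ^θ − c₃τ^{2θ}))` and its inverse. -/
theorem stmt18 (θ c₂ c₃ : ℝ) (hθ : 8/5 < θ) (hθ' : θ < 9/5) :
    ∃ (lam₀ C C' : ℝ) (N₀ : ℕ), 0 < lam₀ ∧ lam₀ < 1 ∧ 0 < C ∧ 0 < C' ∧
      -- (i) positivity of the denominator on (0, λ₀], so that G is well-defined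
      (∀ τ ∈ Set.Ioc (0:ℝ) lam₀, 0 < 1/θ - c₂ * τ ^ θ - c₃ * τ ^ (2*θ)) ∧
      ∀ G : ℝ → ℝ,
        (∀ lam, G lam =
          ∫ τ in lam..lam₀, (τ ^ (1+θ) * (1/θ - c₂ * τ ^ θ - c₃ * τ ^ (2*θ)))⁻¹) →
        -- (i) the integrand is integrable on [λ, λ₀] for every λ ∈ (0, λ₀]
        (∀ lam ∈ Set.Ioc (0:ℝ) lam₀,
            IntervalIntegrable
              (fun τ => (τ ^ (1+θ) * (1/θ - c₂ * τ ^ θ - c₃ * τ ^ (2*θ)))⁻¹)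
              volume lam lam₀) ∧
        -- (ii) G is strictly decreasing and maps (0, λ₀] bijectively onto [0, ∞)
        StrictAntiOn G (Set.Ioc 0 lam₀) ∧
        Set.BijOn G (Set.Ioc 0 lam₀) (Set.Ici 0) ∧
        -- (iii) asymptotics of G
        (∀ lam ∈ Set.Ioc (0:ℝ) lam₀,
            |G lam - lam ^ (-θ) + c₂ * θ ^ 2 * Real.log lam| ≤ C) ∧
        -- (iv) asymptotics of the inverse of G
        ∃ Ginv : ℝ → ℝ,
          Set.MapsTo Ginv (Set.Ici 0) (Set.Ioc 0 lam₀) ∧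
          Set.InvOn Ginv G (Set.Ioc 0 lam₀) (Set.Ici 0) ∧
          ∀ n : ℕ, N₀ ≤ n →
            |Ginv n - (n : ℝ) ^ (-(1/θ))| ≤ C' * (n : ℝ) ^ (-1 - 1/θ) * Real.log n := by
  have hθ1 : 1 < θ := by linarith
  have hθ0 : 0 < θ := by linarith
  set l : ℝ := 1 / (4 * (|c₂| + |c₃| + 1)) with hl
  have hS : 0 ≤ |c₂| + |c₃| := by positivity
  have hl0 : 0 < l := by positivity
  have hl1 : l < 1 := by
    rw [hl, div_lt_one (by positivity)]; linarith
  have hD : ∀ τ ∈ Set.Ioc 0 l, 1 / (2*θ) ≤ den θ c₂ c₃ τ := fun τ hτ =>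
    half_inv_le_den hθ1 (by linarith) hτ.1 hτ.2
  set C : ℝ := (θ^2 * c₂^2 + θ * |c₃| + θ^2 * |c₂ * c₃|) * (2*θ)
        + |l ^ (-θ)| + |c₂ * θ^2 * Real.log l| with hC
  have hC0 : 0 < C := by
    have : 0 < l ^ (-θ) := by positivity
    positivity
  have hk : 0 ≤ |c₂| * θ := by positivity
  obtain ⟨N₀, hN₀⟩ := exists_near_of_log_error hC0 hk
  refine ⟨l, C, 1/θ * (2⁻¹) ^ (-1 - 1/θ) * (C + 2 * (|c₂| * θ)), N₀, hl0, hl1, hC0,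
    by positivity, fun τ hτ => lt_of_lt_of_le (by positivity) (hD τ hτ), fun G hG => ?_⟩
  obtain rfl : G = fun a => ∫ τ in a..l, integrand θ c₂ c₃ τ := funext hG
  have hbij := bijOn_integral hθ1 hl0 hl1.le hD
  have hasymp := fun a ha => abs_integral_asymptotics_le (a := a) hθ1 hl1.le hD ha
  refine ⟨fun a ha => intervalIntegrable_integrand hθ1 hD ha ⟨hl0, le_rfl⟩,
    strictAntiOn_integral hθ1 hD, hbij, hasymp, Function.invFunOn _ (Set.Ioc 0 l),
    hbij.surjOn.mapsTo_invFunOn, hbij.invOn_invFunOn, fun n hn => ?_⟩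
  have hn0 : (n:ℝ) ∈ Set.Ici (0:ℝ) := Set.mem_Ici.2 n.cast_nonneg
  have hmem := hbij.surjOn.mapsTo_invFunOn hn0
  have hval := hbij.invOn_invFunOn.2 hn0
  set x := Function.invFunOn (fun a => ∫ τ in a..l, integrand θ c₂ c₃ τ) (Set.Ioc 0 l) n
  have hx0 : 0 < x := hmem.1
  have hx1 : x ≤ 1 := hmem.2.trans hl1.le
  have hax := hasymp x hmem
  simp only at hval
  rw [hval] at hax
  obtain ⟨hn3, hnear⟩ := hN₀ n hn
  have hnpos : (0:ℝ) < n := by exact_mod_cast (by omega : 0 < n)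
  have hy1 : 1 ≤ x ^ (-θ) := Real.one_le_rpow_of_pos_of_le_one_of_nonpos hx0 hx1 (by linarith)
  have hlog : Real.log (x ^ (-θ)) = -θ * Real.log x := Real.log_rpow hx0 _
  have hxlog : Real.log x ≤ 0 := Real.log_nonpos hx0.le hx1
  have herr : |(n:ℝ) - x ^ (-θ)| ≤ C + |c₂| * θ * Real.log (x ^ (-θ)) := by
    have h1 : |c₂ * θ^2 * Real.log x| = |c₂| * θ * Real.log (x ^ (-θ)) := by
      rw [hlog, abs_mul, abs_mul, abs_of_pos (by positivity : 0 < θ^2), abs_of_nonpos hxlog]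
      ring
    have h2 := abs_sub (n - x ^ (-θ) + c₂ * θ^2 * Real.log x) (c₂ * θ^2 * Real.log x)
    rw [add_sub_cancel_right, h1] at h2
    linarith
  obtain ⟨hhalf, hnl⟩ := hnear _ hy1 herr
  have hxy : (x ^ (-θ)) ^ (-(1/θ)) = x := by
    rw [← Real.rpow_mul hx0.le]
    have : -θ * -(1/θ) = 1 := by field_simp
    rw [this, Real.rpow_one]
  have hmv := abs_rpow_sub_rpow_le (p := 1/θ) (by positivity) hnpos hhalf
  rw [hxy, div_eq_mul_inv (n:ℝ) 2, Real.mul_rpow hnpos.le (by norm_num)] at hmv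
  calc |x - (n:ℝ) ^ (-(1/θ))|
      ≤ 1/θ * ((n:ℝ) ^ (-1 - 1/θ) * 2⁻¹ ^ (-1 - 1/θ)) * |(n:ℝ) - x ^ (-θ)| := hmv
    _ ≤ 1/θ * ((n:ℝ) ^ (-1 - 1/θ) * 2⁻¹ ^ (-1 - 1/θ))
          * ((C + 2 * (|c₂| * θ)) * Real.log n) := by gcongr
    _ = _ := by ring
end
end
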